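/- arXiv:1402.6134 — 2 statements merged into one kernel-verified Lean document; each statement's English description precedes it below -/
import Mathlib

section
/- Let n ≥ 1, 1 < p < ∞ and β < p − 1, and let Ω ⊆ ℝⁿ be an open set with nonempty complement. Assume that the lower Assouad codimension of Ω^c is greater than p − β, i.e. there exist t > p − β and C_A ≥ 1 such that |(Ω^c)_r ∩ B(x,R)| ≤ C_A (r/R)^t |B(x,R)| for every x ∈ Ω^c and all 0 < r < R < ∞. Then Ω admits a (p,β)-Hardy inequality: there exists C > 0 such that ∫_Ω |u(x)|^p d_Ω(x)^{β−p} dx ≤ C ∫_Ω ‖∇u(x)‖^p d_Ω(x)^β dx for every Lipschitz function u : ℝⁿ → ℝ with compact support contained in Ω. -/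
open MeasureTheory Metric ENNReal

/-!
Integrating `∇g` along the rays `y + s v` and averaging over `v` in the unit ball gives
`∫ |g| W ≤ ∫ ‖∇g‖ P`, where `P x` is the integral over `s > 0` of the averages of `W` over the balls
`B(x, s)`. By the layer cake formula, the Assouad bound controls the averages of `d_Ω ^ (-α)`,
`α < t`, over balls centred on `Ωᶜ`; applied to `W = d_Ω ^ (b - 1)` with `b < 0` this yields
`P ≤ C d_Ω ^ b`, after splitting at `s = d_Ω x / 2`. This is the Hardy inequality with exponents
`(1, b)`. For `p > 1`, take `g = |u| ^ p` and `b = β - p + 1`: since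
`‖∇g‖ ≤ p |u| ^ (p - 1) ‖∇u‖`, Hölder's inequality bounds the left-hand side `X` of the desired
inequality by a constant times `X ^ (1 - 1 / p) Y ^ (1 / p)`, where `Y` is the integral on the
right, and the finite factor `X ^ (1 - 1 / p)` can be absorbed.
-/

section PowerIntegrals

theorem lintegral_Ioi_ofReal_rpow_of_lt {a c : ℝ} (ha : a < -1) (hc : 0 < c) :
    ∫⁻ τ in Set.Ioi c, ENNReal.ofReal (τ ^ a) = ENNReal.ofReal (c ^ (a + 1) / -(a + 1)) := by
  rw [← ofReal_integral_eq_lintegral_ofReal (integrableOn_Ioi_rpow_of_lt ha hc),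
    integral_Ioi_rpow_of_lt ha hc, neg_div, div_neg]
  filter_upwards [ae_restrict_mem measurableSet_Ioi] with τ hτ
  exact Real.rpow_nonneg (hc.trans hτ).le a

theorem lintegral_Ioc_zero_ofReal_rpow {a c : ℝ} (ha : -1 < a) (hc : 0 ≤ c) :
    ∫⁻ τ in Set.Ioc 0 c, ENNReal.ofReal (τ ^ a) = ENNReal.ofReal (c ^ (a + 1) / (a + 1)) := by
  have hint := (intervalIntegral.intervalIntegrable_rpow' ha (a := 0) (b := c)).1
  rw [← ofReal_integral_eq_lintegral_ofReal hint, ← intervalIntegral.integral_of_le hc,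
    integral_rpow (.inl ha), Real.zero_rpow (by linarith), sub_zero]
  filter_upwards [ae_restrict_mem measurableSet_Ioc] with τ hτ
  exact Real.rpow_nonneg hτ.1.le a

variable {X : Type*} [MeasurableSpace X] {ν : Measure X} {f : X → ℝ} {a t α : ℝ} {K : ℝ≥0∞}

theorem lintegral_Ioi_meas_lt_mul_rpow_le (ha : 0 < a) (hαt : α < t)
    (htail : ∀ τ > a, ν {x | τ < f x} ≤ K * ENNReal.ofReal ((a / τ) ^ t)) :
    ∫⁻ τ in Set.Ioi a, ν {x | τ < f x} * ENNReal.ofReal (τ ^ (α - 1)) ≤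
      K * ENNReal.ofReal (a ^ α / (t - α)) := by
  calc ∫⁻ τ in Set.Ioi a, ν {x | τ < f x} * ENNReal.ofReal (τ ^ (α - 1))
      ≤ ∫⁻ τ in Set.Ioi a, K * ENNReal.ofReal (a ^ t) * ENNReal.ofReal (τ ^ (α - t - 1)) := by
        refine setLIntegral_mono' measurableSet_Ioi fun τ hτ => ?_
        have hτ0 : 0 < τ := ha.trans hτ
        grw [htail τ hτ]
        rw [mul_assoc, mul_assoc, ← ENNReal.ofReal_mul (by positivity),
          ← ENNReal.ofReal_mul (by positivity), Real.div_rpow ha.le hτ0.le, div_eq_mul_inv,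
          ← Real.rpow_neg hτ0.le, mul_assoc, ← Real.rpow_add hτ0]
        ring_nf
        rfl
    _ = K * ENNReal.ofReal (a ^ α / (t - α)) := by
        rw [lintegral_const_mul _ (by fun_prop), lintegral_Ioi_ofReal_rpow_of_lt (by linarith) ha,
          mul_assoc, ← ENNReal.ofReal_mul (by positivity), mul_div_assoc', ← Real.rpow_add ha]
        ring_nf

theorem lintegral_ofReal_rpow_le_of_meas_lt_le (hf : 0 ≤ f) (hfm : Measurable f) (ha : 0 < a)
    (hα : 0 < α) (hαt : α < t)
    (htail : ∀ τ > a, ν {x | τ < f x} ≤ K * ENNReal.ofReal ((a / τ) ^ t)) :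
    ∫⁻ x, ENNReal.ofReal (f x ^ α) ∂ν ≤
      (ν Set.univ + K * ENNReal.ofReal (α / (t - α))) * ENNReal.ofReal (a ^ α) := by
  have hsmall : ∫⁻ τ in Set.Ioc 0 a, ν {x | τ < f x} * ENNReal.ofReal (τ ^ (α - 1)) ≤
      ν Set.univ * ENNReal.ofReal (a ^ α / α) := by
    calc ∫⁻ τ in Set.Ioc 0 a, ν {x | τ < f x} * ENNReal.ofReal (τ ^ (α - 1))
        ≤ ∫⁻ τ in Set.Ioc 0 a, ν Set.univ * ENNReal.ofReal (τ ^ (α - 1)) := by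
          gcongr
          exact Set.subset_univ _
      _ = ν Set.univ * ENNReal.ofReal (a ^ α / α) := by
          rw [lintegral_const_mul _ (by fun_prop),
            lintegral_Ioc_zero_ofReal_rpow (by linarith) ha.le, sub_add_cancel]
  calc ∫⁻ x, ENNReal.ofReal (f x ^ α) ∂ν
      = ENNReal.ofReal α *
          ∫⁻ τ in Set.Ioi 0, ν {x | τ < f x} * ENNReal.ofReal (τ ^ (α - 1)) :=
        lintegral_rpow_eq_lintegral_meas_lt_mul ν (.of_forall hf) hfm.aemeasurable hα
    _ ≤ ENNReal.ofReal α * (ν Set.univ * ENNReal.ofReal (a ^ α / α) +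
          K * ENNReal.ofReal (a ^ α / (t - α))) := by
        rw [← Set.Ioc_union_Ioi_eq_Ioi ha.le]
        grw [lintegral_union_le, hsmall, lintegral_Ioi_meas_lt_mul_rpow_le ha hαt htail]
    _ = (ν Set.univ + K * ENNReal.ofReal (α / (t - α))) * ENNReal.ofReal (a ^ α) := by
        rw [mul_add, add_mul, mul_left_comm, mul_left_comm _ K, mul_assoc K,
          ← ENNReal.ofReal_mul hα.le, ← ENNReal.ofReal_mul hα.le,
          ← ENNReal.ofReal_mul' (by positivity), mul_div_cancel₀ _ hα.ne', mul_div_assoc',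
          div_mul_eq_mul_div]

end PowerIntegrals

section AssouadCodimension

variable {X : Type*} [PseudoMetricSpace X] [MeasurableSpace X]

/-- The estimate `μ (A_r ∩ B(x, R)) ≤ C (r / R)^t μ (B(x, R))` whose admissible exponents `t` define
the lower Assouad codimension of `A` with respect to `μ`; balls are closed and neighbourhoods are
open. -/
def AssouadCodimBound (μ : Measure X) (A : Set X) (t C : ℝ) : Prop :=
  ∀ x ∈ A, ∀ r R : ℝ, 0 < r → r < R →
    μ (thickening r A ∩ closedBall x R) ≤
      ENNReal.ofReal (C * (r / R) ^ t) * μ (closedBall x R)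

variable [OpensMeasurableSpace X] {μ : Measure X} {A : Set X} {t C α R a s : ℝ} {x z : X}

theorem setLAverage_infDist_rpow_le_of_le_half (ha : a ≤ 0) (hx : 0 < infDist x A)
    (hs : s ≤ infDist x A / 2) :
    ⨍⁻ y in closedBall x s, ENNReal.ofReal (infDist y A ^ a) ∂μ ≤
      ENNReal.ofReal ((infDist x A / 2) ^ a) := by
  rw [setLAverage_eq]
  refine ENNReal.div_le_of_le_mul ?_
  rw [← setLIntegral_const]
  refine setLIntegral_mono' measurableSet_closedBall fun y hy => ?_
  have hdist : infDist x A ≤ infDist y A + dist x y := infDist_le_infDist_add_dist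
  rw [mem_closedBall'] at hy
  exact ENNReal.ofReal_le_ofReal (Real.rpow_le_rpow_of_nonpos (half_pos hx) (by linarith) ha)

theorem AssouadCodimBound.setLAverage_infDist_rpow_neg_le (h : AssouadCodimBound μ A t C)
    (hα : 0 < α) (hαt : α < t) (hz : z ∈ A) (hR : 0 < R) :
    ⨍⁻ y in closedBall z R, ENNReal.ofReal (infDist y A ^ (-α)) ∂μ ≤
      (1 + ENNReal.ofReal C * ENNReal.ofReal (α / (t - α))) * ENNReal.ofReal (R ^ (-α)) := by
  have htail : ∀ τ > R⁻¹, μ.restrict (closedBall z R) {y | τ < (infDist y A)⁻¹} ≤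
      ENNReal.ofReal C * μ (closedBall z R) * ENNReal.ofReal ((R⁻¹ / τ) ^ t) := fun τ hτ => by
    have hτ0 : 0 < τ := (inv_pos.2 hR).trans hτ
    have hsub : {y | τ < (infDist y A)⁻¹} ⊆ thickening τ⁻¹ A := fun y hy => by
      rw [mem_thickening_iff_infDist_lt ⟨z, hz⟩]
      exact lt_inv_of_lt_inv₀ hτ0 hy
    grw [hsub, Measure.restrict_apply isOpen_thickening.measurableSet,
      h z hz _ R (inv_pos.2 hτ0) (inv_lt_of_inv_lt₀ hR hτ), ENNReal.ofReal_mul' (by positivity),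
      mul_right_comm, inv_div_comm]
  have hinv : ∀ y, infDist y A ^ (-α) = (infDist y A)⁻¹ ^ α := fun y => by
    rw [Real.rpow_neg infDist_nonneg, Real.inv_rpow infDist_nonneg]
  simp only [hinv]
  rw [setLAverage_eq]
  refine ENNReal.div_le_of_le_mul <| (lintegral_ofReal_rpow_le_of_meas_lt_le
    (fun y => inv_nonneg.2 infDist_nonneg) measurable_infDist.inv (inv_pos.2 hR) hα hαt
      htail).trans_eq ?_
  rw [Measure.restrict_apply_univ, Real.inv_rpow hR.le, ← Real.rpow_neg hR.le]
  ring

end AssouadCodimension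
section Rays

variable {E : Type*} [NormedAddCommGroup E] [NormedSpace ℝ E]

theorem enorm_le_lintegral_Ioi_enorm_deriv {f : ℝ → ℝ} {a b : ℝ} (hab : a ≤ b)
    (hf : AbsolutelyContinuousOnInterval f a b) (hfb : f b = 0) :
    ‖f a‖ₑ ≤ ∫⁻ s in Set.Ioi a, ‖deriv f s‖ₑ := by
  have hftc := hf.integral_deriv_eq_sub
  rw [hfb, zero_sub, intervalIntegral.integral_of_le hab] at hftc
  calc ‖f a‖ₑ = ‖∫ s in Set.Ioc a b, deriv f s‖ₑ := by rw [hftc, enorm_neg]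
    _ ≤ ∫⁻ s in Set.Ioc a b, ‖deriv f s‖ₑ := enorm_integral_le_lintegral_enorm _
    _ ≤ ∫⁻ s in Set.Ioi a, ‖deriv f s‖ₑ := lintegral_mono_set Set.Ioc_subset_Ioi_self

theorem exists_pos_apply_add_smul_eq_zero {M : Type*} [Zero M] {g : E → M}
    (hg : HasCompactSupport g) (y : E) {v : E} (hv : v ≠ 0) :
    ∃ b : ℝ, 0 < b ∧ g (y + b • v) = 0 := by
  have hray : Filter.Tendsto (fun s : ℝ => y + s • v) Filter.atTop (Bornology.cobounded E) := by
    rw [← tendsto_norm_atTop_iff_cobounded]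
    refine Filter.tendsto_atTop_mono (fun s => ?_) (Filter.tendsto_atTop_add_const_right _ (-‖y‖)
      (Filter.tendsto_id.atTop_mul_const (norm_pos_iff.2 hv)))
    have := norm_sub_le (y + s • v) y
    rw [add_sub_cancel_left, norm_smul] at this
    have := mul_le_mul_of_nonneg_right (Real.le_norm_self s) (norm_nonneg v)
    simp only [id]
    linarith
  rw [hasCompactSupport_iff_eventuallyEq, Filter.coclosedCompact_eq_cocompact] at hg
  exact ((Filter.eventually_gt_atTop 0).and
    (hray.eventually (hg.filter_mono cobounded_le_cocompact))).exists

variable [MeasurableSpace E] [BorelSpace E] {μ : Measure E}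

theorem ae_ae_add_smul [SecondCountableTopology E] [SFinite μ] [μ.IsAddRightInvariant]
    {P : E → Prop} (hPm : MeasurableSet {x | P x}) (hP : ∀ᵐ x ∂μ, P x) (v : E) :
    ∀ᵐ y ∂μ, ∀ᵐ s : ℝ, P (y + s • v) := by
  have hshift : ∀ s : ℝ, ∀ᵐ y ∂μ, P (y + s • v) := fun s =>
    (measurePreserving_add_right μ (s • v)).quasiMeasurePreserving.ae hP
  have hmeas : Measurable fun q : ℝ × E => q.2 + q.1 • v := by fun_prop
  exact (Measure.ae_ae_comm (p := fun s y => P (y + s • v)) (hmeas hPm)).1 (.of_forall hshift)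

variable [FiniteDimensional ℝ E] [μ.IsAddHaarMeasure] {g : E → ℝ} {K : NNReal}

theorem ae_enorm_le_lintegral_Ioi_enorm_fderiv (hg : LipschitzWith K g) (hc : HasCompactSupport g)
    {v : E} (hv : v ≠ 0) :
    ∀ᵐ y ∂μ, ‖g y‖ₑ ≤ (∫⁻ s in Set.Ioi (0 : ℝ), ‖fderiv ℝ g (y + s • v)‖ₑ) * ‖v‖ₑ := by
  filter_upwards [ae_ae_add_smul (measurableSet_of_differentiableAt ℝ g)
    (hg.ae_differentiableAt (μ := μ)) v] with y hdiff
  obtain ⟨b, hb, hgb⟩ := exists_pos_apply_add_smul_eq_zero hc y hv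
  have hLip : LipschitzWith (K * ‖v‖₊) fun s : ℝ => g (y + s • v) :=
    hg.comp <| LipschitzWith.of_dist_le_mul fun a b => by
      simp [dist_eq_norm, ← sub_smul, norm_smul, mul_comm]
  have hderiv : ∀ᵐ s : ℝ, ‖deriv (fun s : ℝ => g (y + s • v)) s‖ₑ ≤
      ‖fderiv ℝ g (y + s • v)‖ₑ * ‖v‖ₑ := by
    filter_upwards [hdiff] with s hs
    have hline : HasDerivAt (fun s : ℝ => y + s • v) v s := by
      simpa using ((hasDerivAt_id s).smul_const v).const_add y
    have hcomp := (hs.hasFDerivAt.comp_hasDerivAt s hline).deriv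
    rw [Function.comp_def] at hcomp
    rw [hcomp]
    exact ContinuousLinearMap.le_opENorm _ _
  calc ‖g y‖ₑ = ‖g (y + (0 : ℝ) • v)‖ₑ := by rw [zero_smul, add_zero]
    _ ≤ ∫⁻ s in Set.Ioi (0 : ℝ), ‖deriv (fun s : ℝ => g (y + s • v)) s‖ₑ :=
        enorm_le_lintegral_Ioi_enorm_deriv hb.le
          hLip.lipschitzOnWith.absolutelyContinuousOnInterval hgb
    _ ≤ ∫⁻ s in Set.Ioi (0 : ℝ), ‖fderiv ℝ g (y + s • v)‖ₑ * ‖v‖ₑ :=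
        lintegral_mono_ae (ae_restrict_of_ae hderiv)
    _ = (∫⁻ s in Set.Ioi (0 : ℝ), ‖fderiv ℝ g (y + s • v)‖ₑ) * ‖v‖ₑ :=
        lintegral_mul_const _ (by fun_prop)

theorem lintegral_enorm_mul_le_of_direction (hg : LipschitzWith K g) (hc : HasCompactSupport g)
    {W : E → ℝ≥0∞} (hW : Measurable W) {v : E} (hv : v ≠ 0) (hv1 : ‖v‖ ≤ 1) :
    ∫⁻ y, ‖g y‖ₑ * W y ∂μ ≤
      ∫⁻ x, ‖fderiv ℝ g x‖ₑ * (∫⁻ s in Set.Ioi (0 : ℝ), W (x - s • v)) ∂μ := by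
  have hv1' : ‖v‖ₑ ≤ 1 := by rw [← ofReal_norm]; exact ENNReal.ofReal_le_one.2 hv1
  calc ∫⁻ y, ‖g y‖ₑ * W y ∂μ
      ≤ ∫⁻ y, (∫⁻ s in Set.Ioi (0 : ℝ), ‖fderiv ℝ g (y + s • v)‖ₑ) * W y ∂μ := by
        refine lintegral_mono_ae ?_
        filter_upwards [ae_enorm_le_lintegral_Ioi_enorm_fderiv hg hc hv] with y hy
        gcongr
        exact hy.trans (mul_le_of_le_one_right' hv1')
    _ = ∫⁻ y, (∫⁻ s in Set.Ioi (0 : ℝ), ‖fderiv ℝ g (y + s • v)‖ₑ * W y) ∂μ :=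
        lintegral_congr fun y => (lintegral_mul_const _ (by fun_prop)).symm
    _ = ∫⁻ s in Set.Ioi (0 : ℝ), ∫⁻ y, ‖fderiv ℝ g (y + s • v)‖ₑ * W y ∂μ :=
        lintegral_lintegral_swap (Measurable.aemeasurable (by fun_prop))
    _ = ∫⁻ s in Set.Ioi (0 : ℝ), ∫⁻ x, ‖fderiv ℝ g x‖ₑ * W (x - s • v) ∂μ :=
        lintegral_congr fun s => by
          simpa using lintegral_add_right_eq_self
            (fun x => ‖fderiv ℝ g x‖ₑ * W (x - s • v)) (s • v)
    _ = ∫⁻ x, (∫⁻ s in Set.Ioi (0 : ℝ), ‖fderiv ℝ g x‖ₑ * W (x - s • v)) ∂μ :=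
        lintegral_lintegral_swap (Measurable.aemeasurable (by fun_prop))
    _ = ∫⁻ x, ‖fderiv ℝ g x‖ₑ * (∫⁻ s in Set.Ioi (0 : ℝ), W (x - s • v)) ∂μ :=
        lintegral_congr fun x => lintegral_const_mul _ (by fun_prop)

theorem lintegral_enorm_mul_le_of_random_direction (hg : LipschitzWith K g)
    (hc : HasCompactSupport g) {W : E → ℝ≥0∞} (hW : Measurable W) {ν : Measure E}
    [IsProbabilityMeasure ν] (hν : ∀ᵐ v ∂ν, v ≠ 0 ∧ ‖v‖ ≤ 1) :
    ∫⁻ y, ‖g y‖ₑ * W y ∂μ ≤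
      ∫⁻ x, ‖fderiv ℝ g x‖ₑ * (∫⁻ s in Set.Ioi (0 : ℝ), ∫⁻ v, W (x - s • v) ∂ν) ∂μ := by
  calc ∫⁻ y, ‖g y‖ₑ * W y ∂μ = ∫⁻ _v, ∫⁻ y, ‖g y‖ₑ * W y ∂μ ∂ν := by simp
    _ ≤ ∫⁻ v, ∫⁻ x, ‖fderiv ℝ g x‖ₑ * (∫⁻ s in Set.Ioi (0 : ℝ), W (x - s • v)) ∂μ ∂ν := by
        refine lintegral_mono_ae ?_
        filter_upwards [hν] with v hv
        exact lintegral_enorm_mul_le_of_direction hg hc hW hv.1 hv.2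
    _ = ∫⁻ x, ∫⁻ v, ‖fderiv ℝ g x‖ₑ * (∫⁻ s in Set.Ioi (0 : ℝ), W (x - s • v)) ∂ν ∂μ := by
        refine lintegral_lintegral_swap (Measurable.aemeasurable ?_)
        fun_prop
    _ = ∫⁻ x, ‖fderiv ℝ g x‖ₑ * (∫⁻ s in Set.Ioi (0 : ℝ), ∫⁻ v, W (x - s • v) ∂ν) ∂μ := by
        refine lintegral_congr fun x => ?_
        rw [lintegral_const_mul _ (by fun_prop),
          lintegral_lintegral_swap (Measurable.aemeasurable (by fun_prop))]

/-- A substitute for the Riesz potential of order one of `W`, to which it is proportional when `μ`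
is a Haar measure in dimension at least two. Written through ball averages, it arises from an
average over directions in the unit ball without passing to polar coordinates. -/
noncomputable def ballAveragePotential (μ : Measure E) (W : E → ℝ≥0∞) (x : E) : ℝ≥0∞ :=
  ∫⁻ s in Set.Ioi (0 : ℝ), ⨍⁻ y in closedBall x s, W y ∂μ

theorem setLAverage_unitBall_comp_sub_smul (W : E → ℝ≥0∞) (x : E) {s : ℝ} (hs : 0 < s) :
    ⨍⁻ v in closedBall (0 : E) 1, W (x - s • v) ∂μ = ⨍⁻ y in closedBall x s, W y ∂μ := by
  let e : E ≃ₜ E := (Homeomorph.smulOfNeZero s hs.ne').trans (Homeomorph.subLeft x)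
  set c : ℝ≥0∞ := ENNReal.ofReal |(s ^ Module.finrank ℝ E)⁻¹|
  have hmap : μ.map e = c • μ := by
    rw [show ⇑e = (fun y => x - y) ∘ fun v => s • v from rfl,
      ← Measure.map_map (by fun_prop) (by fun_prop), Measure.map_addHaar_smul μ hs.ne',
      Measure.map_smul, (Measure.measurePreserving_sub_left μ x).map_eq]
  have hpre : e ⁻¹' closedBall x s = closedBall 0 1 := by
    ext v
    simp [e, dist_eq_norm, norm_smul, abs_of_pos hs, hs]
  have he := e.measurableEmbedding
  have hint : ∫⁻ v in closedBall (0 : E) 1, W (x - s • v) ∂μ =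
      c * ∫⁻ y in closedBall x s, W y ∂μ := by
    rw [← smul_eq_mul, ← lintegral_smul_measure, ← Measure.restrict_smul, ← hmap, he.restrict_map,
      he.lintegral_map, hpre]
    rfl
  have hvol : μ (closedBall (0 : E) 1) = c * μ (closedBall x s) := by
    rw [← hpre, ← he.map_apply, hmap, Measure.smul_apply, smul_eq_mul]
  rw [setLAverage_eq, setLAverage_eq, hint, hvol,
    ENNReal.mul_div_mul_left _ _ (by positivity) ENNReal.ofReal_ne_top]

theorem lintegral_enorm_mul_le_lintegral_enorm_fderiv_mul_ballAveragePotential [Nontrivial E]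
    (hg : LipschitzWith K g) (hc : HasCompactSupport g) {W : E → ℝ≥0∞} (hW : Measurable W) :
    ∫⁻ y, ‖g y‖ₑ * W y ∂μ ≤ ∫⁻ x, ‖fderiv ℝ g x‖ₑ * ballAveragePotential μ W x ∂μ := by
  have hpos : μ (closedBall (0 : E) 1) ≠ 0 := (measure_closedBall_pos μ _ one_pos).ne'
  have hfin : μ (closedBall (0 : E) 1) ≠ ∞ := measure_closedBall_lt_top.ne
  let ν : Measure E := (μ (closedBall 0 1))⁻¹ • μ.restrict (closedBall 0 1)
  have : IsProbabilityMeasure ν := ⟨by simp [ν, ENNReal.inv_mul_cancel hpos hfin]⟩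
  have hν : ∀ᵐ v ∂ν, v ≠ 0 ∧ ‖v‖ ≤ 1 := by
    refine Measure.ae_smul_measure ?_ _
    filter_upwards [ae_restrict_of_ae (Measure.ae_ne μ 0),
      ae_restrict_mem measurableSet_closedBall] with v hv0 hv1
    exact ⟨hv0, mem_closedBall_zero_iff.1 hv1⟩
  refine (lintegral_enorm_mul_le_of_random_direction hg hc hW hν).trans_eq ?_
  refine lintegral_congr fun x => congrArg _ ?_
  refine setLIntegral_congr_fun measurableSet_Ioi fun s hs => ?_
  rw [← setLAverage_unitBall_comp_sub_smul W x hs, setLAverage_eq']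

end Rays

section PotentialEstimate

variable {E : Type*} [NormedAddCommGroup E] [NormedSpace ℝ E] [FiniteDimensional ℝ E]
  [MeasurableSpace E] [BorelSpace E] {μ : Measure E} [μ.IsAddHaarMeasure]

theorem setLAverage_closedBall_le_of_subset (W : E → ℝ≥0∞) {x z : E} {r k : ℝ} (hk : 0 < k)
    (hsub : closedBall x r ⊆ closedBall z (k * r)) :
    ⨍⁻ y in closedBall x r, W y ∂μ ≤
      ENNReal.ofReal (k ^ Module.finrank ℝ E) * ⨍⁻ y in closedBall z (k * r), W y ∂μ := by
  have hvol : μ (closedBall z (k * r)) =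
      ENNReal.ofReal (k ^ Module.finrank ℝ E) * μ (closedBall x r) := by
    rw [Measure.addHaar_closedBall_mul_of_pos μ z hk, Measure.addHaar_closedBall_center μ x]
  rw [setLAverage_eq, setLAverage_eq, hvol, ← mul_div_assoc,
    ENNReal.mul_div_mul_left _ _ (by positivity) ENNReal.ofReal_ne_top]
  gcongr

variable {A : Set E} {x : E} {β : ℝ}

theorem setLAverage_infDist_rpow_le_of_half_lt {a s : ℝ} {M : ℝ≥0∞} (ha : a ≤ 0)
    (hx : 0 < infDist x A) (hs : infDist x A / 2 < s)
    (hM : ∀ z ∈ A, ∀ R > 0, ⨍⁻ y in closedBall z R, ENNReal.ofReal (infDist y A ^ a) ∂μ ≤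
      M * ENNReal.ofReal (R ^ a)) :
    ⨍⁻ y in closedBall x s, ENNReal.ofReal (infDist y A ^ a) ∂μ ≤
      ENNReal.ofReal (5 ^ Module.finrank ℝ E) * M * ENNReal.ofReal (s ^ a) := by
  have hA : A.Nonempty := by
    by_contra hA
    simp [Set.not_nonempty_iff_eq_empty.1 hA] at hx
  obtain ⟨z, hz, hxz⟩ := (infDist_lt_iff hA).1 (show infDist x A < 4 * s by linarith)
  have hs0 : 0 < s := (half_pos hx).trans hs
  have hsub : closedBall x s ⊆ closedBall z (5 * s) :=
    closedBall_subset_closedBall' (by linarith)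
  have hmono : (5 * s) ^ a ≤ s ^ a := Real.rpow_le_rpow_of_nonpos hs0 (by linarith) ha
  grw [setLAverage_closedBall_le_of_subset _ (by norm_num) hsub, hM z hz _ (by positivity),
    hmono, mul_assoc]

theorem ballAveragePotential_infDist_rpow_le {M : ℝ≥0∞} (hβ : β < 0) (hx : 0 < infDist x A)
    (hM : ∀ z ∈ A, ∀ R > 0, ⨍⁻ y in closedBall z R, ENNReal.ofReal (infDist y A ^ (β - 1)) ∂μ ≤
      M * ENNReal.ofReal (R ^ (β - 1))) :
    ballAveragePotential μ (fun y => ENNReal.ofReal (infDist y A ^ (β - 1))) x ≤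
      (1 + ENNReal.ofReal (5 ^ Module.finrank ℝ E) * M * ENNReal.ofReal (-β)⁻¹) *
        ENNReal.ofReal ((infDist x A / 2) ^ β) := by
  set ρ := infDist x A / 2
  set c := ENNReal.ofReal (5 ^ Module.finrank ℝ E) * M
  have hρ : 0 < ρ := half_pos hx
  have hnear : ∫⁻ s in Set.Ioc 0 ρ,
      ⨍⁻ y in closedBall x s, ENNReal.ofReal (infDist y A ^ (β - 1)) ∂μ ≤
        ENNReal.ofReal (ρ ^ β) := by
    calc _ ≤ ∫⁻ _ in Set.Ioc 0 ρ, ENNReal.ofReal (ρ ^ (β - 1)) :=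
          setLIntegral_mono' measurableSet_Ioc fun s hs =>
            setLAverage_infDist_rpow_le_of_le_half (by linarith) hx hs.2
      _ = ENNReal.ofReal (ρ ^ β) := by
          rw [setLIntegral_const, Real.volume_Ioc, sub_zero, ← ENNReal.ofReal_mul (by positivity),
            ← Real.rpow_add_one hρ.ne', sub_add_cancel]
  have hfar : ∫⁻ s in Set.Ioi ρ,
      ⨍⁻ y in closedBall x s, ENNReal.ofReal (infDist y A ^ (β - 1)) ∂μ ≤
        c * (ENNReal.ofReal (-β)⁻¹ * ENNReal.ofReal (ρ ^ β)) := by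
    calc _ ≤ ∫⁻ s in Set.Ioi ρ, c * ENNReal.ofReal (s ^ (β - 1)) :=
          setLIntegral_mono' measurableSet_Ioi fun s hs =>
            setLAverage_infDist_rpow_le_of_half_lt (by linarith) hx hs hM
      _ = c * (ENNReal.ofReal (-β)⁻¹ * ENNReal.ofReal (ρ ^ β)) := by
          rw [lintegral_const_mul _ (by fun_prop),
            lintegral_Ioi_ofReal_rpow_of_lt (by linarith) hρ, sub_add_cancel, div_eq_inv_mul,
            ENNReal.ofReal_mul (inv_nonneg.2 (by linarith))]
  rw [ballAveragePotential, ← Set.Ioc_union_Ioi_eq_Ioi hρ.le]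
  grw [lintegral_union_le, hnear, hfar]
  rw [add_mul, one_mul, ← mul_assoc c]

theorem AssouadCodimBound.exists_ballAveragePotential_infDist_rpow_le {t C : ℝ}
    (h : AssouadCodimBound μ A t C) (hβ : β < 0) (ht : 1 - β < t) :
    ∃ K ≠ ∞, ∀ x, 0 < infDist x A →
      ballAveragePotential μ (fun y => ENNReal.ofReal (infDist y A ^ (β - 1))) x ≤
        K * ENNReal.ofReal (infDist x A ^ β) := by
  set M : ℝ≥0∞ := 1 + ENNReal.ofReal C * ENNReal.ofReal ((1 - β) / (t - (1 - β)))
  have hM : ∀ z ∈ A, ∀ R > 0,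
      ⨍⁻ y in closedBall z R, ENNReal.ofReal (infDist y A ^ (β - 1)) ∂μ ≤
        M * ENNReal.ofReal (R ^ (β - 1)) := fun z hz R hR => by
    simpa only [neg_sub] using h.setLAverage_infDist_rpow_neg_le (by linarith) ht hz hR
  refine ⟨(1 + ENNReal.ofReal (5 ^ Module.finrank ℝ E) * M * ENNReal.ofReal (-β)⁻¹) *
    ENNReal.ofReal (2⁻¹ ^ β), by finiteness, fun x hx => ?_⟩
  refine (ballAveragePotential_infDist_rpow_le hβ hx hM).trans_eq ?_
  rw [div_eq_inv_mul, Real.mul_rpow (by norm_num) infDist_nonneg,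
    ENNReal.ofReal_mul (by positivity), ← mul_assoc]

end PotentialEstimate

section RpowComp

variable {F : Type*} [NormedAddCommGroup F] [InnerProductSpace ℝ F] {p : ℝ}

theorem exists_lipschitzWith_norm_rpow {X : Type*} [PseudoMetricSpace X] {u : X → F} {L : NNReal}
    (hp : 1 < p) (hu : LipschitzWith L u) (hrange : IsCompact (Set.range u)) :
    ∃ K, LipschitzWith K fun x => ‖u x‖ ^ p := by
  obtain ⟨K, hK⟩ := ((contDiff_norm_rpow hp).locallyLipschitz.locallyLipschitzOn
    (s := Set.range u)).exists_lipschitzOnWith_of_compact hrange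
  refine ⟨K * L, lipschitzOnWith_univ.1 ?_⟩
  exact hK.comp hu.lipschitzOnWith fun x _ => Set.mem_range_self x

theorem norm_fderiv_norm_rpow_le_of_differentiableAt {E : Type*} [NormedAddCommGroup E]
    [NormedSpace ℝ E] {u : E → F} {x : E} (hp : 1 < p) (hu : DifferentiableAt ℝ u x) :
    ‖fderiv ℝ (fun x => ‖u x‖ ^ p) x‖ ≤ p * ‖u x‖ ^ (p - 1) * ‖fderiv ℝ u x‖ := by
  have hcomp : fderiv ℝ (fun x => ‖u x‖ ^ p) x =
      (fderiv ℝ (fun y : F => ‖y‖ ^ p) (u x)).comp (fderiv ℝ u x) :=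
    fderiv_comp (g := fun y : F => ‖y‖ ^ p) x (differentiable_norm_rpow hp _) hu
  rw [hcomp, ← norm_fderiv_norm_id_rpow _ hp]
  exact ContinuousLinearMap.opNorm_comp_le _ _

end RpowComp

section WeightedHolder

theorem le_rpow_mul_of_le_mul_rpow_mul_rpow {X Y C : ℝ≥0∞} {p : ℝ} (hp : 1 ≤ p) (hX : X ≠ ∞)
    (h : X ≤ C * (X ^ (1 - 1 / p) * Y ^ (1 / p))) : X ≤ C ^ p * Y := by
  rcases eq_or_ne X 0 with rfl | hX0
  · simp
  have hp0 : 0 < p := by linarith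
  have hθ : 0 ≤ 1 - 1 / p := sub_nonneg.2 ((div_le_one hp0).2 hp)
  have hXθ : X ^ (1 - 1 / p) ≠ 0 := (ENNReal.rpow_pos (pos_iff_ne_zero.2 hX0) hX).ne'
  have hroot : X ^ (1 / p) ≤ C * Y ^ (1 / p) := by
    rw [← ENNReal.mul_le_mul_iff_right hXθ (ENNReal.rpow_ne_top_of_nonneg hθ hX),
      ← ENNReal.rpow_add _ _ hX0 hX, sub_add_cancel, ENNReal.rpow_one, mul_left_comm]
    exact h
  calc X = (X ^ (1 / p)) ^ p := by rw [one_div, ENNReal.rpow_inv_rpow hp0.ne']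
    _ ≤ (C * Y ^ (1 / p)) ^ p := by gcongr
    _ = C ^ p * Y := by
      rw [ENNReal.mul_rpow_of_nonneg _ _ hp0.le, one_div, ENNReal.rpow_inv_rpow hp0.ne']

theorem lintegral_rpow_sub_one_mul_mul_rpow_le {X : Type*} [MeasurableSpace X] {ν : Measure X}
    {a b d : X → ℝ} (ha : Measurable a) (hb : Measurable b) (hd : Measurable d)
    (ha0 : 0 ≤ a) (hb0 : 0 ≤ b) (hd0 : ∀ᵐ x ∂ν, 0 < d x) {p : ℝ} (hp : 1 ≤ p) (β : ℝ) :
    ∫⁻ x, ENNReal.ofReal (a x ^ (p - 1) * b x * d x ^ (β - p + 1)) ∂ν ≤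
      (∫⁻ x, ENNReal.ofReal (a x ^ p * d x ^ (β - p)) ∂ν) ^ (1 - 1 / p) *
        (∫⁻ x, ENNReal.ofReal (b x ^ p * d x ^ β) ∂ν) ^ (1 / p) := by
  have hp0 : 0 < p := by linarith
  have hθ : 0 ≤ 1 - 1 / p := sub_nonneg.2 ((div_le_one hp0).2 hp)
  refine le_of_eq_of_le (lintegral_congr_ae ?_) (ENNReal.lintegral_mul_norm_pow_le
    (by fun_prop) (by fun_prop) hθ (one_div_nonneg.2 hp0.le) (sub_add_cancel 1 _))
  filter_upwards [hd0] with x hdx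
  have hax : 0 ≤ a x := ha0 x
  have hbx : 0 ≤ b x := hb0 x
  have hexp₁ : p * (1 - 1 / p) = p - 1 := by field_simp
  have hexp₂ : β - p + 1 = (β - p) * (1 - 1 / p) + β * (1 / p) := by field_simp; ring
  rw [ENNReal.ofReal_rpow_of_nonneg (by positivity) hθ,
    ENNReal.ofReal_rpow_of_nonneg (by positivity) (by positivity),
    ← ENNReal.ofReal_mul (by positivity), Real.mul_rpow (by positivity) (by positivity),
    Real.mul_rpow (by positivity) (by positivity), ← Real.rpow_mul hax, ← Real.rpow_mul hdx.le,
    ← Real.rpow_mul hbx, ← Real.rpow_mul hdx.le, mul_one_div_cancel hp0.ne', Real.rpow_one,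
    hexp₁, hexp₂, Real.rpow_add hdx]
  congr 1
  ring

end WeightedHolder

section Hardy

theorem infDist_compl_pos {X : Type*} [PseudoMetricSpace X] {Ω : Set X} {x : X} (hΩ : IsOpen Ω)
    (hΩc : Ωᶜ.Nonempty) (hx : x ∈ Ω) : 0 < infDist x Ωᶜ :=
  (hΩ.isClosed_compl.notMem_iff_infDist_pos hΩc).1 (Set.notMem_compl_iff.2 hx)

theorem setLIntegral_abs_rpow_mul_infDist_rpow_ne_top {X : Type*} [PseudoMetricSpace X]
    [MeasurableSpace X] [OpensMeasurableSpace X] {μ : Measure X} [IsFiniteMeasureOnCompacts μ]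
    {Ω : Set X} (hΩ : IsOpen Ω) (hΩc : Ωᶜ.Nonempty) {u : X → ℝ} (hu : Continuous u)
    (huc : HasCompactSupport u) (hus : tsupport u ⊆ Ω) {p : ℝ} (hp : 0 < p) (a : ℝ) :
    ∫⁻ x in Ω, ENNReal.ofReal (|u x| ^ p * infDist x Ωᶜ ^ a) ∂μ ≠ ∞ := by
  have hcont : ContinuousOn (fun x => |u x| ^ p * infDist x Ωᶜ ^ a) (tsupport u) :=
    (hu.abs.rpow_const fun _ => .inr hp.le).continuousOn.mul <|
      (continuous_infDist_pt _).continuousOn.rpow_const fun x hx =>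
        .inl (infDist_compl_pos hΩ hΩc (hus hx)).ne'
  obtain ⟨M, hM⟩ := huc.isCompact.exists_bound_of_continuousOn hcont
  have hle : ∀ x, ENNReal.ofReal (|u x| ^ p * infDist x Ωᶜ ^ a) ≤
      (tsupport u).indicator (fun _ => ENNReal.ofReal M) x := fun x => by
    by_cases hx : x ∈ tsupport u
    · rw [Set.indicator_of_mem hx]
      exact ENNReal.ofReal_le_ofReal ((le_abs_self _).trans (hM x hx))
    · simp [image_eq_zero_of_notMem_tsupport hx, Real.zero_rpow hp.ne']
  refine ne_top_of_le_ne_top ?_ ((setLIntegral_le_lintegral _ _).trans (lintegral_mono hle))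
  rw [lintegral_indicator_const (isClosed_tsupport u).measurableSet]
  exact ENNReal.mul_ne_top ENNReal.ofReal_ne_top huc.isCompact.measure_lt_top.ne

variable {E : Type*} [NormedAddCommGroup E] [NormedSpace ℝ E] [MeasurableSpace E]

/-- The `(p, β)`-Hardy inequality on `Ω` with constant `C`, tested on Lipschitz functions with
compact support in `Ω`. The integrals take values in `[0, ∞]`, so no integrability is presupposed;
`fderiv` takes the junk value `0` where `u` is not differentiable, which is a null set for Haar
measures. -/
def HardyInequality (μ : Measure E) (Ω : Set E) (p β : ℝ) (C : ℝ≥0∞) : Prop :=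
  ∀ u : E → ℝ, (∃ L : NNReal, LipschitzWith L u) → HasCompactSupport u → tsupport u ⊆ Ω →
    ∫⁻ x in Ω, ENNReal.ofReal (|u x| ^ p * infDist x Ωᶜ ^ (β - p)) ∂μ ≤
      C * ∫⁻ x in Ω, ENNReal.ofReal (‖fderiv ℝ u x‖ ^ p * infDist x Ωᶜ ^ β) ∂μ

theorem HardyInequality.mono {μ : Measure E} {Ω : Set E} {p β : ℝ} {C C' : ℝ≥0∞}
    (h : HardyInequality μ Ω p β C) (hC : C ≤ C') : HardyInequality μ Ω p β C' :=
  fun u hu huc hus => (h u hu huc hus).trans (by gcongr)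

variable [BorelSpace E] [FiniteDimensional ℝ E] {μ : Measure E} [μ.IsAddHaarMeasure] {Ω : Set E}
  {p β : ℝ} {C : ℝ≥0∞}

theorem hardyInequality_one_of_ballAveragePotential_le [Nontrivial E] (hΩ : MeasurableSet Ω)
    (hpot : ∀ x ∈ Ω,
      ballAveragePotential μ (fun y => ENNReal.ofReal (infDist y Ωᶜ ^ (β - 1))) x ≤
        C * ENNReal.ofReal (infDist x Ωᶜ ^ β)) :
    HardyInequality μ Ω 1 β C := by
  rintro u ⟨L, hu⟩ huc hus
  set W : E → ℝ≥0∞ := fun y => ENNReal.ofReal (infDist y Ωᶜ ^ (β - 1))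
  have hsupp : (Function.support fun x => ‖fderiv ℝ u x‖ₑ * ballAveragePotential μ W x) ⊆ Ω :=
    fun x hx => hus <| support_fderiv_subset ℝ <| Function.mem_support.2 fun hfderiv =>
      left_ne_zero_of_mul hx (by rw [← ofReal_norm, hfderiv, norm_zero, ENNReal.ofReal_zero])
  calc ∫⁻ x in Ω, ENNReal.ofReal (|u x| ^ (1 : ℝ) * infDist x Ωᶜ ^ (β - 1)) ∂μ
      ≤ ∫⁻ x, ‖u x‖ₑ * W x ∂μ := by
        refine (setLIntegral_le_lintegral _ _).trans_eq (lintegral_congr fun x => ?_)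
        rw [Real.rpow_one, ENNReal.ofReal_mul (abs_nonneg _), Real.enorm_eq_ofReal_abs]
    _ ≤ ∫⁻ x, ‖fderiv ℝ u x‖ₑ * ballAveragePotential μ W x ∂μ :=
        lintegral_enorm_mul_le_lintegral_enorm_fderiv_mul_ballAveragePotential hu huc
          (by fun_prop)
    _ = ∫⁻ x in Ω, ‖fderiv ℝ u x‖ₑ * ballAveragePotential μ W x ∂μ :=
        (setLIntegral_eq_of_support_subset hsupp).symm
    _ ≤ ∫⁻ x in Ω, C * ENNReal.ofReal (‖fderiv ℝ u x‖ ^ (1 : ℝ) * infDist x Ωᶜ ^ β) ∂μ := by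
        refine setLIntegral_mono' hΩ fun x hx => ?_
        grw [hpot x hx, Real.rpow_one, ENNReal.ofReal_mul (norm_nonneg _), ofReal_norm,
          mul_left_comm]
    _ = _ := lintegral_const_mul _ (by fun_prop)

theorem AssouadCodimBound.exists_hardyInequality_one {t C_A : ℝ}
    (h : AssouadCodimBound μ Ωᶜ t C_A) (hβ : β < 0) (ht : 1 - β < t) (hΩ : IsOpen Ω)
    (hΩc : Ωᶜ.Nonempty) : ∃ C ≠ ∞, HardyInequality μ Ω 1 β C := by
  rcases Ω.eq_empty_or_nonempty with rfl | ⟨x, hx⟩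
  · exact ⟨0, ENNReal.zero_ne_top, fun u _ _ _ => by simp⟩
  obtain ⟨z, hz⟩ := hΩc
  have : Nontrivial E := ⟨x, z, fun hxz => hz (hxz ▸ hx)⟩
  obtain ⟨C, hC, hpot⟩ := h.exists_ballAveragePotential_infDist_rpow_le hβ ht
  exact ⟨C, hC, hardyInequality_one_of_ballAveragePotential_le hΩ.measurableSet fun x hx =>
    hpot x (infDist_compl_pos hΩ ⟨z, hz⟩ hx)⟩

theorem HardyInequality.setLIntegral_abs_rpow_le (h : HardyInequality μ Ω 1 (β - p + 1) C)
    (hp : 1 < p) {u : E → ℝ} {L : NNReal} (hu : LipschitzWith L u) (huc : HasCompactSupport u)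
    (hus : tsupport u ⊆ Ω) :
    ∫⁻ x in Ω, ENNReal.ofReal (|u x| ^ p * infDist x Ωᶜ ^ (β - p)) ∂μ ≤
      C * ENNReal.ofReal p * ∫⁻ x in Ω,
        ENNReal.ofReal (|u x| ^ (p - 1) * ‖fderiv ℝ u x‖ * infDist x Ωᶜ ^ (β - p + 1)) ∂μ := by
  have hp0 : 0 < p := by linarith
  have hzero : (fun y : ℝ => ‖y‖ ^ p) 0 = 0 := by simp [hp0.ne']
  have hfderiv : ∀ᵐ x ∂μ.restrict Ω, ‖fderiv ℝ (fun x => ‖u x‖ ^ p) x‖ ≤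
      p * (|u x| ^ (p - 1) * ‖fderiv ℝ u x‖) := by
    filter_upwards [ae_restrict_of_ae (hu.ae_differentiableAt (μ := μ))] with x hx
    rw [← mul_assoc]
    exact norm_fderiv_norm_rpow_le_of_differentiableAt hp hx
  have hone := h (fun x => ‖u x‖ ^ p)
    (exists_lipschitzWith_norm_rpow hp hu (huc.isCompact_range hu.continuous))
    (huc.comp_left (g := fun y => ‖y‖ ^ p) hzero)
    ((tsupport_comp_subset (g := fun y => ‖y‖ ^ p) hzero u).trans hus)
  calc ∫⁻ x in Ω, ENNReal.ofReal (|u x| ^ p * infDist x Ωᶜ ^ (β - p)) ∂μ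
      = ∫⁻ x in Ω, ENNReal.ofReal
          (|‖u x‖ ^ p| ^ (1 : ℝ) * infDist x Ωᶜ ^ (β - p + 1 - 1)) ∂μ := by
        refine lintegral_congr fun x => ?_
        rw [Real.rpow_one, Real.norm_eq_abs, abs_of_nonneg (a := |u x| ^ p) (by positivity),
          add_sub_cancel_right]
    _ ≤ _ := hone
    _ ≤ C * ∫⁻ x in Ω, ENNReal.ofReal p * ENNReal.ofReal
          (|u x| ^ (p - 1) * ‖fderiv ℝ u x‖ * infDist x Ωᶜ ^ (β - p + 1)) ∂μ := by
        gcongr C * ?_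
        refine lintegral_mono_ae ?_
        filter_upwards [hfderiv] with x hx
        rw [← ENNReal.ofReal_mul hp0.le, Real.rpow_one, ← mul_assoc p]
        exact ENNReal.ofReal_le_ofReal
          (mul_le_mul_of_nonneg_right hx (Real.rpow_nonneg infDist_nonneg _))
    _ = _ := by
        rw [lintegral_const_mul' _ _ ENNReal.ofReal_ne_top, mul_assoc]

theorem HardyInequality.of_one (h : HardyInequality μ Ω 1 (β - p + 1) C) (hp : 1 < p)
    (hΩ : IsOpen Ω) (hΩc : Ωᶜ.Nonempty) :
    HardyInequality μ Ω p β ((C * ENNReal.ofReal p) ^ p) := by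
  rintro u ⟨L, hu⟩ huc hus
  have hfinite := setLIntegral_abs_rpow_mul_infDist_rpow_ne_top (μ := μ) hΩ hΩc hu.continuous huc
    hus (zero_lt_one.trans hp) (β - p)
  have hdist : ∀ᵐ x ∂μ.restrict Ω, 0 < infDist x Ωᶜ := by
    filter_upwards [ae_restrict_mem hΩ.measurableSet] with x hx
    exact infDist_compl_pos hΩ hΩc hx
  have hholder := lintegral_rpow_sub_one_mul_mul_rpow_le hu.continuous.abs.measurable
    (measurable_fderiv ℝ u).norm measurable_infDist (fun x => abs_nonneg (u x))
    (fun x => norm_nonneg (fderiv ℝ u x)) hdist hp.le β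
  exact le_rpow_mul_of_le_mul_rpow_mul_rpow hp.le hfinite <|
    (h.setLIntegral_abs_rpow_le hp hu huc hus).trans (by gcongr)

theorem hardy_of_lower_assouad_codim_gt_general {t C_A : ℝ} (hp : 1 ≤ p) (hβ : β < p - 1)
    (hΩ : IsOpen Ω) (hΩc : Ωᶜ.Nonempty) (ht : p - β < t) (h : AssouadCodimBound μ Ωᶜ t C_A) :
    ∃ C : ℝ, 0 < C ∧ HardyInequality μ Ω p β (ENNReal.ofReal C) := by
  obtain ⟨C₁, hC₁, hardy_one⟩ := h.exists_hardyInequality_one (β := β - p + 1) (by linarith)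
    (by linarith) hΩ hΩc
  obtain ⟨C, hC, hardy⟩ : ∃ C ≠ ∞, HardyInequality μ Ω p β C := by
    rcases hp.eq_or_lt with rfl | hp
    · exact ⟨C₁, hC₁, by simpa only [sub_add_cancel] using hardy_one⟩
    · exact ⟨_, by finiteness, hardy_one.of_one hp hΩ hΩc⟩
  refine ⟨C.toReal + 1, by positivity, hardy.mono ?_⟩
  rw [← ENNReal.ofReal_toReal hC]
  exact ENNReal.ofReal_le_ofReal (by simp)

end Hardy

/-- Euclidean case of Theorem 1.1: if the lower Assouad codimension of
`Ωᶜ` exceeds `p - β` (with `β < p - 1 < p`), then `Ω` admits a `(p,β)`-Hardy inequality. -/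
theorem hardy_of_lower_assouad_codim_gt
    (n : ℕ) (hn : 1 ≤ n) (p β : ℝ) (hp : 1 < p) (hβ : β < p - 1)
    (Ω : Set (EuclideanSpace ℝ (Fin n))) (hΩopen : IsOpen Ω) (hΩc : Ωᶜ.Nonempty)
    (t C_A : ℝ) (ht : p - β < t) (hCA : 1 ≤ C_A)
    (hthin : ∀ x ∈ Ωᶜ, ∀ r R : ℝ, 0 < r → r < R →
      volume (Metric.thickening r Ωᶜ ∩ Metric.closedBall x R) ≤
        ENNReal.ofReal (C_A * (r / R) ^ t) * volume (Metric.closedBall x R)) :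
    ∃ C : ℝ, 0 < C ∧ ∀ u : EuclideanSpace ℝ (Fin n) → ℝ,
      (∃ L : NNReal, LipschitzWith L u) → HasCompactSupport u → tsupport u ⊆ Ω →
      ∫⁻ x in Ω, ENNReal.ofReal (|u x| ^ p * Metric.infDist x Ωᶜ ^ (β - p)) ≤
        ENNReal.ofReal C *
          ∫⁻ x in Ω, ENNReal.ofReal (‖fderiv ℝ u x‖ ^ p * Metric.infDist x Ωᶜ ^ β) :=
  hardy_of_lower_assouad_codim_gt_general hp.le hβ hΩopen hΩc ht hthin
end

section
/- Let n ≥ 1, 1 ≤ p < ∞ and β < p − 1, and let Ω ⊆ ℝⁿ be an open set with nonempty complement such that there exist t > p − β and C_A ≥ 1 with |(Ω^c)_r ∩ B(x,R)| ≤ C_A (r/R)^t |B(x,R)| for every x ∈ Ω^c and all 0 < r < R < ∞ (i.e. the lower Assouad codimension of Ω^c exceeds p − β). Then there exists C > 0 such that ∫_Ω |u(x)|^p d_Ω(x)^{β−p} dx ≤ C ∫_Ω ‖∇u(x)‖^p d_Ω(x)^β dx for every Lipschitz function u : ℝⁿ → ℝ for which the set {x ∈ Ω : u(x) ≠ 0}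 is bounded; in particular, u is not required to vanish on Ω^c. -/
open MeasureTheory Metric ENNReal

open Set Filter Topology Module

open scoped NNReal

/-!
Let `d = dist(·, Ωᶜ)` and `s = p - β > 1`. Averaging the fundamental theorem of calculus over all
rays issuing from `x` bounds a compactly supported Lipschitz function `v` by the potential
`P g x = ∫₀^∞ ⨍_{B(x, r)} g dr` of `g = ‖∇v‖`. Thinness of `Ωᶜ` with exponent `t > s` gives
Aikawa's estimate `⨍_{B(x, r)} d ^ (-s) ≲ r ^ (-s)` for `d x ≤ 2 r`, hence
`P (d ^ (-s)) ≲ d ^ (1 - s)`. As `P` is symmetric,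
`∫ |v| d ^ (-s) ≤ ∫ P ‖∇v‖ · d ^ (-s) = ∫ ‖∇v‖ · P (d ^ (-s)) ≲ ∫ ‖∇v‖ d ^ (1 - s)`.
For `v = |u| ^ p`, Hölder's inequality bounds the right side by
`p (∫ |u| ^ p d ^ (β - p)) ^ (1 - 1 / p) (∫ ‖∇u‖ ^ p d ^ β) ^ (1 / p)`, whose first factor is
absorbed on the left because Aikawa's estimate makes it finite. Finally `Ωᶜ` is a null set, so a
continuous function whose support in `Ω` is bounded has compact support.
-/

/-! ### Power integrals and the layer-cake formula -/

section PowerIntegrals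

variable {a c : ℝ}

lemma lintegral_Ioi_rpow_of_lt (ha : a < -1) (hc : 0 < c) :
    ∫⁻ r in Ioi c, ENNReal.ofReal (r ^ a) = ENNReal.ofReal (-c ^ (a + 1) / (a + 1)) := by
  rw [← integral_Ioi_rpow_of_lt ha hc,
    ofReal_integral_eq_lintegral_ofReal (integrableOn_Ioi_rpow_of_lt ha hc)]
  filter_upwards [ae_restrict_mem measurableSet_Ioi] with r hr
  exact Real.rpow_nonneg (hc.trans hr).le _

lemma lintegral_Ioc_zero_rpow (ha : -1 < a) (hc : 0 ≤ c) :
    ∫⁻ r in Ioc 0 c, ENNReal.ofReal (r ^ a) = ENNReal.ofReal (c ^ (a + 1) / (a + 1)) := by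
  rw [← ofReal_integral_eq_lintegral_ofReal, ← intervalIntegral.integral_of_le hc,
    integral_rpow (Or.inl ha), Real.zero_rpow (by linarith), sub_zero]
  · exact (intervalIntegral.intervalIntegrable_rpow' ha).1
  · filter_upwards [ae_restrict_mem measurableSet_Ioc] with r hr
    exact Real.rpow_nonneg hr.1.le _

lemma lintegral_Ioi_mul_rpow_neg_sub_one {s d : ℝ} (hs : 0 < s) (hd : 0 < d) :
    ∫⁻ r in Ioi d, ENNReal.ofReal (s * r ^ (-s - 1)) = ENNReal.ofReal (d ^ (-s)) := by
  simp_rw [ENNReal.ofReal_mul hs.le]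
  rw [lintegral_const_mul' _ _ ofReal_ne_top, lintegral_Ioi_rpow_of_lt (by linarith) hd,
    ← ENNReal.ofReal_mul hs.le, sub_add_cancel, neg_div_neg_eq, mul_div_cancel₀ _ hs.ne']

end PowerIntegrals

lemma lintegral_lintegral_Ioi_mul_eq {X : Type*} [MeasurableSpace X] (μ : Measure X) [SFinite μ]
    {f : X → ℝ} (hf : Measurable f) (hf₀ : ∀ x, 0 ≤ f x) {g : X → ℝ≥0∞} (hg : Measurable g)
    {k : ℝ → ℝ≥0∞} (hk : Measurable k) :
    ∫⁻ x, (∫⁻ r in Ioi (f x), k r) * g x ∂μ =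
      ∫⁻ r in Ioi 0, k r * ∫⁻ x in {x | f x < r}, g x ∂μ := by
  set S : Set (X × ℝ) := {q | f q.1 < q.2}
  have hS : MeasurableSet S := measurableSet_lt (by fun_prop) (by fun_prop)
  set F : X × ℝ → ℝ≥0∞ := S.indicator fun q ↦ k q.2 * g q.1
  have integral_fst (x : X) : ∫⁻ r in Ioi 0, F (x, r) = (∫⁻ r in Ioi (f x), k r) * g x := by
    have hF : (fun r ↦ F (x, r)) = (Ioi (f x)).indicator fun r ↦ k r * g x := rfl
    rw [hF, setLIntegral_indicator measurableSet_Ioi,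
      inter_eq_left.2 (Ioi_subset_Ioi (hf₀ x)), lintegral_mul_const _ hk]
  have integral_snd (r : ℝ) : ∫⁻ x, F (x, r) ∂μ = k r * ∫⁻ x in {x | f x < r}, g x ∂μ := by
    have hF : (fun x ↦ F (x, r)) = {x | f x < r}.indicator fun x ↦ k r * g x := rfl
    rw [hF, lintegral_indicator (measurableSet_lt hf measurable_const), lintegral_const_mul _ hg]
  simp_rw [← integral_fst, ← integral_snd]
  exact lintegral_lintegral_swap
    (f := fun x r ↦ F (x, r)) (((by fun_prop : Measurable _).indicator hS).aemeasurable)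

/-! ### Thin sets -/

/-- The estimate `μ (K_r ∩ B(x, R)) ≤ C (r / R) ^ t μ (B(x, R))` whose validity for some `C`
says that `t` is admissible in the definition of the lower Assouad codimension of `K`. -/
def AssouadThin {X : Type*} [PseudoMetricSpace X] [MeasurableSpace X] (μ : Measure X) (K : Set X)
    (t C : ℝ) : Prop :=
  ∀ x ∈ K, ∀ r R : ℝ, 0 < r → r < R →
    μ (thickening r K ∩ closedBall x R) ≤ ENNReal.ofReal (C * (r / R) ^ t) * μ (closedBall x R)

namespace AssouadThin

variable {X : Type*} [PseudoMetricSpace X] [MeasurableSpace X] {μ : Measure X} {K : Set X}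
  {s t C : ℝ}

lemma measure_closure_eq_zero [ProperSpace X] [IsFiniteMeasureOnCompacts μ]
    (hK : AssouadThin μ K t C) (ht : 0 < t) : μ (closure K) = 0 := by
  rcases K.eq_empty_or_nonempty with rfl | ⟨x₀, hx₀⟩
  · simp
  rw [← iUnion_inter_closedBall_nat (closure K) x₀, measure_iUnion_null_iff]
  intro N
  set R : ℝ := N + 1
  have hR : 0 < R := by positivity
  have hlim : Tendsto (fun r : ℝ ↦ ENNReal.ofReal (C * (r / R) ^ t) * μ (closedBall x₀ R))
      (𝓝[>] 0) (𝓝 0) := by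
    have hcont : Continuous fun r : ℝ ↦ C * (r / R) ^ t :=
      continuous_const.mul ((continuous_id.div_const R).rpow_const fun _ ↦ Or.inr ht.le)
    have h := ENNReal.Tendsto.mul_const (b := μ (closedBall x₀ R))
      (ENNReal.tendsto_ofReal (hcont.tendsto 0)) (Or.inr measure_closedBall_lt_top.ne)
    simp only [zero_div, Real.zero_rpow ht.ne', mul_zero, ofReal_zero, zero_mul] at h
    exact h.mono_left nhdsWithin_le_nhds
  refine le_antisymm (ge_of_tendsto hlim ?_) zero_le
  filter_upwards [Ioo_mem_nhdsGT hR] with r hr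
  calc μ (closure K ∩ closedBall x₀ N)
      ≤ μ (thickening r K ∩ closedBall x₀ R) := by
        gcongr
        · exact closure_subset_thickening hr.1 K
        · exact (lt_add_one (N : ℝ)).le
    _ ≤ ENNReal.ofReal (C * (r / R) ^ t) * μ (closedBall x₀ R) := hK x₀ hx₀ r R hr.1 hr.2

lemma ae_infDist_pos [ProperSpace X] [IsFiniteMeasureOnCompacts μ]
    (hK : AssouadThin μ K t C) (ht : 0 < t) (hne : K.Nonempty) : ∀ᵐ x ∂μ, 0 < infDist x K := by
  filter_upwards [measure_eq_zero_iff_ae_notMem.1 (hK.measure_closure_eq_zero ht)] with x hx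
  exact (infDist_pos_iff_notMem_closure hne).1 hx

lemma nontrivial_of_nonempty [ProperSpace X] [IsFiniteMeasureOnCompacts μ] [NeZero μ]
    (hK : AssouadThin μ K t C) (ht : 0 < t) (hne : K.Nonempty) : Nontrivial X := by
  by_contra h
  have := not_nontrivial_iff_subsingleton.1 h
  have hnull := hK.measure_closure_eq_zero ht
  rw [hne.closure.eq_univ, Measure.measure_univ_eq_zero] at hnull
  exact NeZero.ne μ hnull

lemma mul_measure_thickening_inter_closedBall_le (hK : AssouadThin μ K t C) {x₀ : X}
    (hx₀ : x₀ ∈ K) {r R : ℝ} (hr : 0 < r) (hrR : r < R) :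
    ENNReal.ofReal (s * r ^ (-s - 1)) * μ (thickening r K ∩ closedBall x₀ R) ≤
      ENNReal.ofReal (r ^ (t - s - 1)) *
        (ENNReal.ofReal (s * R ^ (-t)) * (ENNReal.ofReal C * μ (closedBall x₀ R))) := by
  have hR : 0 < R := hr.trans hrR
  have hpow : s * r ^ (-s - 1) * (r / R) ^ t = r ^ (t - s - 1) * (s * R ^ (-t)) := by
    rw [Real.div_rpow hr.le hR.le, show t - s - 1 = -s - 1 + t by ring, Real.rpow_add hr,
      Real.rpow_neg hR.le]
    ring
  calc ENNReal.ofReal (s * r ^ (-s - 1)) * μ (thickening r K ∩ closedBall x₀ R)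
      ≤ ENNReal.ofReal (s * r ^ (-s - 1)) *
          (ENNReal.ofReal (C * (r / R) ^ t) * μ (closedBall x₀ R)) := by
        gcongr
        exact hK x₀ hx₀ r R hr hrR
    _ = ENNReal.ofReal (s * r ^ (-s - 1) * (r / R) ^ t) *
          (ENNReal.ofReal C * μ (closedBall x₀ R)) := by
        rw [ENNReal.ofReal_mul' (by positivity : 0 ≤ (r / R) ^ t),
          ENNReal.ofReal_mul' (by positivity : 0 ≤ (r / R) ^ t)]
        ring
    _ = _ := by rw [hpow, ENNReal.ofReal_mul (by positivity), mul_assoc]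

lemma setLIntegral_Ioc_measure_thickening_le (hK : AssouadThin μ K t C) (hs : 0 < s) (hst : s < t)
    {x₀ : X} (hx₀ : x₀ ∈ K) {R : ℝ} (hR : 0 < R) :
    ∫⁻ r in Ioc 0 R, ENNReal.ofReal (s * r ^ (-s - 1)) * μ (thickening r K ∩ closedBall x₀ R) ≤
      ENNReal.ofReal (s / (t - s)) * ENNReal.ofReal C * ENNReal.ofReal (R ^ (-s)) *
        μ (closedBall x₀ R) := by
  have : 0 < t - s := sub_pos.2 hst
  set c : ℝ≥0∞ := ENNReal.ofReal (s * R ^ (-t)) * (ENNReal.ofReal C * μ (closedBall x₀ R))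
  calc ∫⁻ r in Ioc 0 R, ENNReal.ofReal (s * r ^ (-s - 1)) * μ (thickening r K ∩ closedBall x₀ R)
      ≤ ∫⁻ r in Ioc 0 R, ENNReal.ofReal (r ^ (t - s - 1)) * c := by
        rw [← restrict_Ioo_eq_restrict_Ioc]
        exact setLIntegral_mono' measurableSet_Ioo fun r hr ↦
          hK.mul_measure_thickening_inter_closedBall_le hx₀ hr.1 hr.2
    _ = ENNReal.ofReal (R ^ (t - s) / (t - s)) * c := by
        rw [lintegral_mul_const _ (by fun_prop), lintegral_Ioc_zero_rpow (by linarith) hR.le,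
          sub_add_cancel]
    _ = ENNReal.ofReal (s / (t - s)) * ENNReal.ofReal C * ENNReal.ofReal (R ^ (-s)) *
          μ (closedBall x₀ R) := by
        have hexp : R ^ (t - s) / (t - s) * (s * R ^ (-t)) = s / (t - s) * R ^ (-s) := by
          rw [show -s = t - s + -t by ring, Real.rpow_add hR]
          ring
        rw [← mul_assoc, ← ENNReal.ofReal_mul (by positivity), hexp,
          ENNReal.ofReal_mul (by positivity)]
        ring

lemma exists_setLIntegral_closedBall_infDist_rpow_le [OpensMeasurableSpace X] [SFinite μ]
    (hK : AssouadThin μ K t C) (hs : 0 < s) (hst : s < t) :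
    ∃ c : ℝ≥0, ∀ x₀ ∈ K, ∀ R : ℝ, 0 < R →
      ∫⁻ x in closedBall x₀ R, ENNReal.ofReal (infDist x K ^ (-s)) ∂μ ≤
        c * ENNReal.ofReal (R ^ (-s)) * μ (closedBall x₀ R) := by
  refine ⟨(s / (t - s)).toNNReal * C.toNNReal + 1, fun x₀ hx₀ R hR ↦ ?_⟩
  set B := closedBall x₀ R
  set k : ℝ → ℝ≥0∞ := fun r ↦ ENNReal.ofReal (s * r ^ (-s - 1))
  have hk : Measurable k := by fun_prop
  have weight_le (x : X) :
      ENNReal.ofReal (infDist x K ^ (-s)) ≤ (∫⁻ r in Ioi (infDist x K), k r) * 1 := by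
    rcases (infDist_nonneg (x := x) (s := K)).eq_or_lt with h | h
    · simp [← h, Real.zero_rpow (neg_ne_zero.2 hs.ne')]
    · rw [lintegral_Ioi_mul_rpow_neg_sub_one hs h, mul_one]
  have sublevel (r : ℝ) :
      ∫⁻ _ in {x | infDist x K < r}, 1 ∂μ.restrict B = μ (thickening r K ∩ B) := by
    have hthick : {x | infDist x K < r} = thickening r K :=
      ext fun x ↦ (mem_thickening_iff_infDist_lt ⟨x₀, hx₀⟩).symm
    rw [hthick, setLIntegral_one, Measure.restrict_apply isOpen_thickening.measurableSet]
  calc ∫⁻ x in B, ENNReal.ofReal (infDist x K ^ (-s)) ∂μ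
      ≤ ∫⁻ x in B, (∫⁻ r in Ioi (infDist x K), k r) * 1 ∂μ := lintegral_mono weight_le
    _ = ∫⁻ r in Ioi 0, k r * μ (thickening r K ∩ B) := by
        rw [lintegral_lintegral_Ioi_mul_eq _ (continuous_infDist_pt K).measurable
          (fun _ ↦ infDist_nonneg) measurable_const hk]
        simp_rw [sublevel]
    _ ≤ (∫⁻ r in Ioc 0 R, k r * μ (thickening r K ∩ B)) + ∫⁻ r in Ioi R, k r * μ B := by
        rw [← Ioc_union_Ioi_eq_Ioi hR.le]
        refine (lintegral_union_le _ _ _).trans ?_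
        gcongr
        exact inter_subset_right
    _ ≤ ENNReal.ofReal (s / (t - s)) * ENNReal.ofReal C * ENNReal.ofReal (R ^ (-s)) * μ B +
          ENNReal.ofReal (R ^ (-s)) * μ B := by
        rw [lintegral_mul_const _ hk, lintegral_Ioi_mul_rpow_neg_sub_one hs hR]
        gcongr
        exact hK.setLIntegral_Ioc_measure_thickening_le hs hst hx₀ hR
    _ = _ := by
        push_cast [ENNReal.ofReal]
        ring

lemma lintegral_infDist_rpow_mul_enorm_lt_top [ProperSpace X] [OpensMeasurableSpace X] [SFinite μ]
    [IsFiniteMeasureOnCompacts μ] (hK : AssouadThin μ K t C) (hs : 0 < s) (hst : s < t)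
    (hne : K.Nonempty) {F : Type*} [NormedAddCommGroup F] {v : X → F} (hv : Continuous v)
    (hsupp : HasCompactSupport v) :
    ∫⁻ x, ENNReal.ofReal (infDist x K ^ (-s)) * ‖v x‖ₑ ∂μ < ∞ := by
  obtain ⟨x₀, hx₀⟩ := hne
  obtain ⟨M, hM⟩ := hsupp.exists_bound_of_continuous hv
  obtain ⟨R, hR, hsuppR⟩ := hsupp.isBounded.subset_closedBall_lt 0 x₀
  obtain ⟨c, hc⟩ := hK.exists_setLIntegral_closedBall_infDist_rpow_le hs hst
  have eq_zero_off_ball : ∀ x ∉ closedBall x₀ R,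
      ENNReal.ofReal (infDist x K ^ (-s)) * ‖v x‖ₑ = 0 := fun x hx ↦ by
    simp [image_eq_zero_of_notMem_tsupport fun h ↦ hx (hsuppR h)]
  calc ∫⁻ x, ENNReal.ofReal (infDist x K ^ (-s)) * ‖v x‖ₑ ∂μ
      = ∫⁻ x in closedBall x₀ R, ENNReal.ofReal (infDist x K ^ (-s)) * ‖v x‖ₑ ∂μ :=
        (setLIntegral_eq_of_support_subset fun x hx ↦
          not_imp_comm.1 (eq_zero_off_ball x) hx).symm
    _ ≤ ∫⁻ x in closedBall x₀ R, ENNReal.ofReal (infDist x K ^ (-s)) * ENNReal.ofReal M ∂μ := by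
        gcongr with x
        rw [← ofReal_norm]
        exact ENNReal.ofReal_le_ofReal (hM x)
    _ ≤ c * ENNReal.ofReal (R ^ (-s)) * μ (closedBall x₀ R) * ENNReal.ofReal M := by
        rw [lintegral_mul_const' _ _ ofReal_ne_top]
        gcongr
        exact hc x₀ hx₀ R hR
    _ < ∞ := by
        have hball : μ (closedBall x₀ R) < ∞ := measure_closedBall_lt_top
        finiteness

end AssouadThin

/-! ### The potential of averages -/

section Rays

variable {E : Type*} [NormedAddCommGroup E] [NormedSpace ℝ E]

lemma exists_nonneg_eq_zero_on_ray {v : E → ℝ} (hsupp : HasCompactSupport v) (x : E) {w : E}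
    (hw : w ≠ 0) : ∃ T : ℝ, 0 ≤ T ∧ v (x + T • w) = 0 := by
  obtain ⟨R, hR, hsuppR⟩ := hsupp.isBounded.subset_ball_lt 0 x
  have hw₀ : 0 < ‖w‖ := norm_pos_iff.2 hw
  refine ⟨R / ‖w‖, by positivity, image_eq_zero_of_notMem_tsupport fun hmem ↦ ?_⟩
  have hdist := mem_ball.1 (hsuppR hmem)
  rw [dist_self_add_left, norm_smul, Real.norm_of_nonneg (by positivity),
    div_mul_cancel₀ _ hw₀.ne'] at hdist
  exact hdist.false

lemma enorm_le_lintegral_enorm_fderiv_ray {v : E → ℝ} {L : ℝ≥0} (hv : LipschitzWith L v) {x w : E}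
    (hw : ‖w‖ ≤ 1) {T : ℝ} (hT : 0 ≤ T) (hvT : v (x + T • w) = 0)
    (hdiff : ∀ᵐ r : ℝ, DifferentiableAt ℝ v (x + r • w)) :
    ‖v x‖ₑ ≤ ∫⁻ r in Ioi (0 : ℝ), ‖fderiv ℝ v (x + r • w)‖ₑ := by
  set f : ℝ → ℝ := fun r ↦ v (x + r • w)
  have hf_lip : LipschitzWith (L * ‖w‖₊) f := by
    refine hv.comp (LipschitzWith.of_dist_le_mul fun a b ↦ ?_)
    rw [dist_add_left, dist_eq_norm, ← sub_smul, norm_smul, coe_nnnorm, mul_comm, Real.dist_eq,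
      Real.norm_eq_abs]
  have hf_ftc : ∫ r in Ioc 0 T, deriv f r = -v x := by
    have h := (hf_lip.lipschitzOnWith (s := uIcc 0 T)).absolutelyContinuousOnInterval
      |>.integral_deriv_eq_sub
    simpa [intervalIntegral.integral_of_le hT, f, hvT] using h
  have hf_deriv (r : ℝ) (hr : DifferentiableAt ℝ v (x + r • w)) :
      ‖deriv f r‖ₑ ≤ ‖fderiv ℝ v (x + r • w)‖ₑ := by
    have hray : HasDerivAt (fun r : ℝ ↦ x + r • w) w r := by
      simpa using ((hasDerivAt_id r).smul_const w).const_add x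
    have hf : HasDerivAt f (fderiv ℝ v (x + r • w) w) r := hr.hasFDerivAt.comp_hasDerivAt r hray
    rw [hf.deriv, enorm_le_iff_norm_le]
    exact ContinuousLinearMap.le_of_opNorm_le_of_le _ le_rfl hw |>.trans_eq (mul_one _)
  calc ‖v x‖ₑ = ‖∫ r in Ioc 0 T, deriv f r‖ₑ := by rw [hf_ftc, enorm_neg]
    _ ≤ ∫⁻ r in Ioc 0 T, ‖deriv f r‖ₑ := enorm_integral_le_lintegral_enorm _
    _ ≤ ∫⁻ r in Ioi 0, ‖deriv f r‖ₑ := lintegral_mono_set Ioc_subset_Ioi_self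
    _ ≤ ∫⁻ r in Ioi 0, ‖fderiv ℝ v (x + r • w)‖ₑ :=
        lintegral_mono_ae (ae_restrict_of_ae (hdiff.mono hf_deriv))

end Rays

/-- The potential `∫₀^∞ ⨍_{B(x, r)} g dμ dr` of `g`. For Haar measure on an `n`-dimensional normed
space, `n ≥ 2`, it is a constant multiple of the Riesz potential `∫ g y ‖x - y‖ ^ (1 - n) dμ y`;
written as an integral of averages, it can be compared directly with measure bounds on balls. -/
noncomputable def averagePotential {X : Type*} [PseudoMetricSpace X] [MeasurableSpace X]
    (μ : Measure X) (g : X → ℝ≥0∞) (x : X) : ℝ≥0∞ :=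
  ∫⁻ r in Ioi (0 : ℝ), ⨍⁻ y in ball x r, g y ∂μ

section HaarMeasure

variable {E : Type*} [NormedAddCommGroup E] [NormedSpace ℝ E] [FiniteDimensional ℝ E]
  [MeasurableSpace E] [BorelSpace E] {μ : Measure E} [μ.IsAddHaarMeasure]

lemma averagePotential_eq_lintegral_mul {g : E → ℝ≥0∞} (hg : Measurable g) (x : E) :
    averagePotential μ g x = ∫⁻ y, (∫⁻ r in Ioi (dist y x), (μ (ball 0 r))⁻¹) * g y ∂μ := by
  have hball : Measurable fun r : ℝ ↦ (μ (ball (0 : E) r))⁻¹ :=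
    (show Monotone fun r : ℝ ↦ μ (ball (0 : E) r) from
      fun _ _ h ↦ measure_mono (ball_subset_ball h)).measurable.inv
  rw [lintegral_lintegral_Ioi_mul_eq μ (by fun_prop) (fun _ ↦ dist_nonneg) hg hball]
  refine lintegral_congr fun r ↦ ?_
  rw [setLAverage_eq, Measure.addHaar_ball_center, ENNReal.div_eq_inv_mul]
  rfl

lemma lintegral_mul_averagePotential_comm {f g : E → ℝ≥0∞} (hf : Measurable f)
    (hg : Measurable g) :
    ∫⁻ x, f x * averagePotential μ g x ∂μ = ∫⁻ x, g x * averagePotential μ f x ∂μ := by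
  set k : ℝ → ℝ≥0∞ := fun d ↦ ∫⁻ r in Ioi d, (μ (ball (0 : E) r))⁻¹
  have hk : Measurable k :=
    (show Antitone k from fun _ _ h ↦ lintegral_mono_set (Ioi_subset_Ioi h)).measurable
  simp_rw [averagePotential_eq_lintegral_mul hf, averagePotential_eq_lintegral_mul hg]
  calc ∫⁻ x, f x * ∫⁻ y, k (dist y x) * g y ∂μ ∂μ
      = ∫⁻ x, ∫⁻ y, f x * (k (dist y x) * g y) ∂μ ∂μ :=
        lintegral_congr fun x ↦ (lintegral_const_mul _ (by fun_prop)).symm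
    _ = ∫⁻ y, ∫⁻ x, f x * (k (dist y x) * g y) ∂μ ∂μ :=
        lintegral_lintegral_swap (by fun_prop)
    _ = ∫⁻ y, g y * ∫⁻ x, k (dist x y) * f x ∂μ ∂μ := by
        refine lintegral_congr fun y ↦ ?_
        rw [← lintegral_const_mul _ (by fun_prop)]
        refine lintegral_congr fun x ↦ ?_
        rw [dist_comm]
        ring

lemma setLAverage_unitBall_comp_add_smul {g : E → ℝ≥0∞} (hg : Measurable g) (x : E) {r : ℝ}
    (hr : 0 < r) : ⨍⁻ w in ball 0 1, g (x + r • w) ∂μ = ⨍⁻ y in ball x r, g y ∂μ := by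
  set c : ℝ≥0∞ := ENNReal.ofReal (r ^ finrank ℝ E)
  have hc₀ : c ≠ 0 := (ENNReal.ofReal_pos.2 (by positivity)).ne'
  have hmap : μ.map (fun w ↦ x + r • w) = c⁻¹ • μ := by
    have hcomp : (fun w : E ↦ x + r • w) = (x + ·) ∘ (r • ·) := rfl
    rw [hcomp, ← Measure.map_map (measurable_const_add x) (measurable_const_smul r),
      Measure.map_addHaar_smul μ hr.ne', Measure.map_smul, map_add_left_eq_self,
      abs_of_pos (by positivity), ENNReal.ofReal_inv_of_pos (by positivity)]
  have hpre : (fun w ↦ x + r • w) ⁻¹' ball x r = ball (0 : E) 1 := by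
    ext w
    simp [norm_smul, abs_of_pos hr, hr]
  have hintegral : ∫⁻ w in ball 0 1, g (x + r • w) ∂μ = c⁻¹ * ∫⁻ y in ball x r, g y ∂μ := by
    rw [← hpre, ← setLIntegral_map measurableSet_ball hg (by fun_prop), hmap,
      Measure.restrict_smul, lintegral_smul_measure, smul_eq_mul]
  rw [setLAverage_eq, setLAverage_eq, hintegral, Measure.addHaar_ball_of_pos μ x hr,
    ENNReal.div_eq_inv_mul, ENNReal.div_eq_inv_mul,
    ENNReal.mul_inv (Or.inl hc₀) (Or.inl ofReal_ne_top)]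
  ring

lemma setLAverage_unitBall_lintegral_comp_add_smul {g : E → ℝ≥0∞} (hg : Measurable g) (x : E) :
    ⨍⁻ w in ball 0 1, (∫⁻ r in Ioi (0 : ℝ), g (x + r • w)) ∂μ = averagePotential μ g x := by
  simp_rw [setLAverage_eq']
  rw [lintegral_lintegral_swap (by fun_prop)]
  refine setLIntegral_congr_fun measurableSet_Ioi fun r hr ↦ ?_
  rw [← setLAverage_eq']
  exact setLAverage_unitBall_comp_add_smul hg x hr

lemma ae_ae_comp_add_smul {P : E → Prop} (hPm : MeasurableSet {y | P y}) (hP : ∀ᵐ y ∂μ, P y)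
    (x : E) : ∀ᵐ w ∂μ, ∀ᵐ r : ℝ, P (x + r • w) := by
  rw [← Measure.ae_ae_comm (p := fun (r : ℝ) (w : E) ↦ P (x + r • w))
    (hPm.preimage (by fun_prop : Measurable fun q : ℝ × E ↦ x + q.1 • q.2))]
  filter_upwards [Measure.ae_ne volume 0] with r hr
  exact ((quasiMeasurePreserving_add_left μ x).comp
    (Measure.quasiMeasurePreserving_smul μ hr)).ae hP

lemma enorm_le_averagePotential_fderiv [Nontrivial E] {v : E → ℝ} {L : ℝ≥0}
    (hv : LipschitzWith L v) (hsupp : HasCompactSupport v) (x : E) :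
    ‖v x‖ₑ ≤ averagePotential μ (fun y ↦ ‖fderiv ℝ v y‖ₑ) x := by
  rw [← setLAverage_unitBall_lintegral_comp_add_smul (measurable_fderiv ℝ v).enorm,
    ← setLAverage_const (measure_ball_pos μ 0 one_pos).ne' measure_ball_lt_top.ne ‖v x‖ₑ]
  refine laverage_mono_ae ?_
  filter_upwards [ae_restrict_mem measurableSet_ball, ae_restrict_of_ae (Measure.ae_ne μ 0),
    ae_restrict_of_ae (ae_ae_comp_add_smul (measurableSet_of_differentiableAt ℝ v)
      hv.ae_differentiableAt x)] with w hw hw₀ hdiff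
  obtain ⟨T, hT, hvT⟩ := exists_nonneg_eq_zero_on_ray hsupp x hw₀
  exact enorm_le_lintegral_enorm_fderiv_ray hv (mem_ball_zero_iff.1 hw).le hT hvT hdiff

end HaarMeasure

/-! ### The `L¹` Hardy inequality -/

lemma setLAverage_ball_infDist_rpow_le {X : Type*} [PseudoMetricSpace X] [MeasurableSpace X]
    [OpensMeasurableSpace X] (μ : Measure X) {K : Set X} {s : ℝ} (hs : 0 ≤ s) {y : X} {r : ℝ}
    (hd : 0 < infDist y K) (hr : r ≤ infDist y K / 2) :
    ⨍⁻ x in ball y r, ENNReal.ofReal (infDist x K ^ (-s)) ∂μ ≤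
      ENNReal.ofReal ((infDist y K / 2) ^ (-s)) := by
  have hdist : ∀ x ∈ ball y r, infDist y K / 2 ≤ infDist x K := fun x hx ↦ by
    have h := infDist_le_infDist_add_dist (s := K) (x := y) (y := x)
    rw [dist_comm] at h
    linarith [mem_ball.1 hx]
  rw [setLAverage_eq]
  refine ENNReal.div_le_of_le_mul ?_
  rw [← setLIntegral_const]
  refine setLIntegral_mono' measurableSet_ball fun x hx ↦ ENNReal.ofReal_le_ofReal ?_
  exact Real.rpow_le_rpow_of_nonpos (half_pos hd) (hdist x hx) (neg_nonpos.2 hs)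

lemma setLIntegral_Ioc_setLAverage_infDist_rpow_le {X : Type*} [PseudoMetricSpace X]
    [MeasurableSpace X] [OpensMeasurableSpace X] (μ : Measure X) {K : Set X} {s : ℝ} (hs : 0 ≤ s)
    {y : X} (hd : 0 < infDist y K) :
    ∫⁻ r in Ioc 0 (infDist y K / 2), ⨍⁻ x in ball y r, ENNReal.ofReal (infDist x K ^ (-s)) ∂μ ≤
      ENNReal.ofReal ((infDist y K / 2) ^ (1 - s)) := by
  set δ : ℝ := infDist y K / 2
  have hδ : 0 < δ := half_pos hd
  calc ∫⁻ r in Ioc 0 δ, ⨍⁻ x in ball y r, ENNReal.ofReal (infDist x K ^ (-s)) ∂μ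
      ≤ ∫⁻ _ in Ioc 0 δ, ENNReal.ofReal (δ ^ (-s)) :=
        setLIntegral_mono' measurableSet_Ioc fun r hr ↦
          setLAverage_ball_infDist_rpow_le μ hs hd hr.2
    _ = ENNReal.ofReal (δ ^ (1 - s)) := by
        rw [setLIntegral_const, Real.volume_Ioc, sub_zero, ← ENNReal.ofReal_mul (by positivity),
          ← Real.rpow_add_one hδ.ne', neg_add_eq_sub]

namespace AssouadThin

variable {E : Type*} [NormedAddCommGroup E] [NormedSpace ℝ E] [FiniteDimensional ℝ E]
  [MeasurableSpace E] [BorelSpace E] {μ : Measure E} [μ.IsAddHaarMeasure] {K : Set E} {s t C : ℝ}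

lemma exists_setLAverage_ball_infDist_rpow_le (hK : AssouadThin μ K t C) (hs : 0 < s) (hst : s < t)
    (hne : K.Nonempty) :
    ∃ c : ℝ≥0, ∀ (y : E) (r : ℝ), 0 < r → infDist y K ≤ 2 * r →
      ⨍⁻ x in ball y r, ENNReal.ofReal (infDist x K ^ (-s)) ∂μ ≤ c * ENNReal.ofReal (r ^ (-s)) := by
  obtain ⟨c, hc⟩ := hK.exists_setLIntegral_closedBall_infDist_rpow_le hs hst
  refine ⟨c * 4 ^ finrank ℝ E, fun y r hr hyr ↦ ?_⟩
  obtain ⟨x₀, hx₀, hdist⟩ := (infDist_lt_iff hne).1 (show infDist y K < 3 * r by linarith)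
  have hsub : ball y r ⊆ closedBall x₀ (4 * r) :=
    ball_subset_closedBall.trans (closedBall_subset_closedBall' (by linarith))
  have hvol : μ (closedBall x₀ (4 * r)) = 4 ^ finrank ℝ E * μ (ball y r) := by
    rw [Measure.addHaar_closedBall μ x₀ (by positivity), Measure.addHaar_ball_of_pos μ y hr,
      mul_pow, ENNReal.ofReal_mul (by positivity), ENNReal.ofReal_pow (by positivity),
      ENNReal.ofReal_ofNat, mul_assoc]
  have hrpow : (4 * r) ^ (-s) ≤ r ^ (-s) :=
    Real.rpow_le_rpow_of_nonpos hr (by linarith) (by linarith)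
  rw [setLAverage_eq]
  refine ENNReal.div_le_of_le_mul ?_
  calc ∫⁻ x in ball y r, ENNReal.ofReal (infDist x K ^ (-s)) ∂μ
      ≤ ∫⁻ x in closedBall x₀ (4 * r), ENNReal.ofReal (infDist x K ^ (-s)) ∂μ :=
        lintegral_mono_set hsub
    _ ≤ c * ENNReal.ofReal ((4 * r) ^ (-s)) * μ (closedBall x₀ (4 * r)) :=
        hc x₀ hx₀ _ (by positivity)
    _ ≤ c * ENNReal.ofReal (r ^ (-s)) * μ (closedBall x₀ (4 * r)) := by
        gcongr
    _ = _ := by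
        rw [hvol]
        push_cast
        ring

lemma exists_setLIntegral_Ioi_setLAverage_infDist_rpow_le (hK : AssouadThin μ K t C) (hs : 1 < s)
    (hst : s < t) (hne : K.Nonempty) :
    ∃ c : ℝ≥0, ∀ y, 0 < infDist y K →
      ∫⁻ r in Ioi (infDist y K / 2), ⨍⁻ x in ball y r, ENNReal.ofReal (infDist x K ^ (-s)) ∂μ ≤
        c * ENNReal.ofReal ((infDist y K / 2) ^ (1 - s)) := by
  obtain ⟨c, hc⟩ := hK.exists_setLAverage_ball_infDist_rpow_le (by linarith) hst hne
  refine ⟨c * ((s - 1)⁻¹).toNNReal, fun y hy ↦ ?_⟩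
  have : 0 < s - 1 := by linarith
  set δ : ℝ := infDist y K / 2
  have hδ : 0 < δ := half_pos hy
  calc ∫⁻ r in Ioi δ, ⨍⁻ x in ball y r, ENNReal.ofReal (infDist x K ^ (-s)) ∂μ
      ≤ ∫⁻ r in Ioi δ, c * ENNReal.ofReal (r ^ (-s)) :=
        setLIntegral_mono' measurableSet_Ioi fun r hr ↦
          hc y r (hδ.trans hr) ((div_le_iff₀' two_pos).1 (mem_Ioi.1 hr).le)
    _ = c * ENNReal.ofReal (s - 1)⁻¹ * ENNReal.ofReal (δ ^ (1 - s)) := by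
        rw [lintegral_const_mul _ (by fun_prop), lintegral_Ioi_rpow_of_lt (by linarith) hδ,
          neg_add_eq_sub, ← neg_sub s 1, neg_div_neg_eq, div_eq_inv_mul,
          ENNReal.ofReal_mul (by positivity), mul_assoc]
    _ = _ := by
        push_cast [ENNReal.ofReal]
        rfl

lemma exists_averagePotential_infDist_rpow_le (hK : AssouadThin μ K t C) (hs : 1 < s) (hst : s < t)
    (hne : K.Nonempty) :
    ∃ c : ℝ≥0, ∀ y, 0 < infDist y K →
      averagePotential μ (fun x ↦ ENNReal.ofReal (infDist x K ^ (-s))) y ≤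
        c * ENNReal.ofReal (infDist y K ^ (1 - s)) := by
  obtain ⟨c, hc⟩ := hK.exists_setLIntegral_Ioi_setLAverage_infDist_rpow_le hs hst hne
  refine ⟨(1 + c) * ((2 : ℝ) ^ (s - 1)).toNNReal, fun y hy ↦ ?_⟩
  set δ : ℝ := infDist y K / 2 with hδ
  set A : ℝ → ℝ≥0∞ := fun r ↦ ⨍⁻ x in ball y r, ENNReal.ofReal (infDist x K ^ (-s)) ∂μ
  have hpow : δ ^ (1 - s) = 2 ^ (s - 1) * infDist y K ^ (1 - s) := by
    rw [hδ, Real.div_rpow hy.le two_pos.le, ← neg_sub s 1, Real.rpow_neg two_pos.le,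
      div_inv_eq_mul, mul_comm]
  calc averagePotential μ (fun x ↦ ENNReal.ofReal (infDist x K ^ (-s))) y
      ≤ (∫⁻ r in Ioc 0 δ, A r) + ∫⁻ r in Ioi δ, A r := by
        rw [averagePotential, ← Ioc_union_Ioi_eq_Ioi (half_pos hy).le]
        exact lintegral_union_le _ _ _
    _ ≤ ENNReal.ofReal (δ ^ (1 - s)) + c * ENNReal.ofReal (δ ^ (1 - s)) :=
        add_le_add (setLIntegral_Ioc_setLAverage_infDist_rpow_le μ (by linarith) hy) (hc y hy)
    _ = _ := by
        rw [hpow, ENNReal.ofReal_mul (by positivity)]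
        push_cast [ENNReal.ofReal]
        ring

lemma exists_lintegral_infDist_rpow_mul_enorm_le (hK : AssouadThin μ K t C) (hs : 1 < s)
    (hst : s < t) (hne : K.Nonempty) :
    ∃ c : ℝ≥0, ∀ (v : E → ℝ) (L : ℝ≥0), LipschitzWith L v → HasCompactSupport v →
      ∫⁻ x, ENNReal.ofReal (infDist x K ^ (-s)) * ‖v x‖ₑ ∂μ ≤
        c * ∫⁻ x, ENNReal.ofReal (infDist x K ^ (1 - s)) * ‖fderiv ℝ v x‖ₑ ∂μ := by
  have ht : 0 < t := by linarith
  have := hK.nontrivial_of_nonempty ht hne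
  obtain ⟨c, hc⟩ := hK.exists_averagePotential_infDist_rpow_le hs hst hne
  refine ⟨c, fun v L hv hsupp ↦ ?_⟩
  have hgrad : Measurable fun x ↦ ‖fderiv ℝ v x‖ₑ := (measurable_fderiv ℝ v).enorm
  set w : E → ℝ≥0∞ := fun x ↦ ENNReal.ofReal (infDist x K ^ (-s))
  calc ∫⁻ x, w x * ‖v x‖ₑ ∂μ
      ≤ ∫⁻ x, w x * averagePotential μ (fun y ↦ ‖fderiv ℝ v y‖ₑ) x ∂μ := by
        gcongr with x
        exact enorm_le_averagePotential_fderiv hv hsupp x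
    _ = ∫⁻ x, ‖fderiv ℝ v x‖ₑ * averagePotential μ w x ∂μ :=
        lintegral_mul_averagePotential_comm (by fun_prop) hgrad
    _ ≤ ∫⁻ x, c * (ENNReal.ofReal (infDist x K ^ (1 - s)) * ‖fderiv ℝ v x‖ₑ) ∂μ := by
        refine lintegral_mono_ae ?_
        filter_upwards [hK.ae_infDist_pos ht hne] with x hx
        rw [← mul_assoc, mul_comm]
        gcongr
        exact hc x hx
    _ = _ := lintegral_const_mul' _ _ coe_ne_top

end AssouadThin

/-! ### The `Lᵖ` Hardy inequality -/

lemma exists_lipschitzWith_abs_rpow {X : Type*} [PseudoMetricSpace X] {u : X → ℝ} {L : ℝ≥0}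
    (hu : LipschitzWith L u) {M p : ℝ} (hM : ∀ x, |u x| ≤ M) (hp : 1 ≤ p) :
    ∃ L' : ℝ≥0, LipschitzWith L' fun x ↦ |u x| ^ p := by
  have hcont : ContDiff ℝ 1 fun a : ℝ ↦ a ^ p :=
    mod_cast Real.contDiff_rpow_const_of_le (n := 1) (mod_cast hp)
  obtain ⟨L', hL'⟩ :=
    hcont.contDiffOn.exists_lipschitzOnWith one_ne_zero (convex_Icc 0 M) isCompact_Icc
  have habs : LipschitzWith (1 * L) fun x ↦ |u x| := lipschitzWith_one_norm.comp hu
  exact ⟨L' * (1 * L), lipschitzOnWith_univ.1 <|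
    hL'.comp habs.lipschitzOnWith fun x _ ↦ ⟨abs_nonneg _, hM x⟩⟩

lemma norm_fderiv_abs_rpow_le {E : Type*} [NormedAddCommGroup E] [NormedSpace ℝ E] {p : ℝ}
    (hp : 1 ≤ p) {u : E → ℝ} {x : E} (hu : DifferentiableAt ℝ u x) :
    ‖fderiv ℝ (fun y ↦ |u y| ^ p) x‖ ≤ p * (|u x| ^ (p - 1) * ‖fderiv ℝ u x‖) := by
  rcases eq_or_ne (u x) 0 with hx | hx
  · have hmin : IsLocalMin (fun y ↦ |u y| ^ p) x := Eventually.of_forall fun y ↦ by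
      simp only [hx, abs_zero, Real.zero_rpow (by linarith : p ≠ 0)]
      positivity
    rw [hmin.fderiv_eq_zero, norm_zero]
    positivity
  · have habs : HasFDerivAt (fun y ↦ |u y| ^ p)
        ((p * |u x| ^ (p - 1) * SignType.sign (u x)) • fderiv ℝ u x) x :=
      ((Real.hasDerivAt_rpow_const (Or.inr hp)).comp (u x) (hasDerivAt_abs hx)).comp_hasFDerivAt x
        hu.hasFDerivAt
    have hsign : |(SignType.sign (u x) : ℝ)| = 1 := by
      rcases hx.lt_or_gt with h | h <;> simp [h]
    rw [habs.fderiv, norm_smul, Real.norm_eq_abs, abs_mul, hsign, mul_one,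
      abs_of_nonneg (by positivity), mul_assoc]

lemma ofReal_rpow_mul_eq_mul_rpow_inv {p β a b d : ℝ} (hp : 1 ≤ p) (ha : 0 ≤ a) (hb : 0 ≤ b)
    (hd : 0 < d) :
    ENNReal.ofReal (d ^ (1 - (p - β))) * ENNReal.ofReal (a ^ (p - 1) * b) =
      ENNReal.ofReal (a ^ p * d ^ (β - p)) ^ (1 - p⁻¹) *
        ENNReal.ofReal (b ^ p * d ^ β) ^ p⁻¹ := by
  have hp₀ : 0 < p := by linarith
  have hp₁ : 0 ≤ 1 - p⁻¹ := sub_nonneg.2 (inv_le_one_of_one_le₀ hp)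
  rw [ENNReal.ofReal_rpow_of_nonneg (by positivity) hp₁,
    ENNReal.ofReal_rpow_of_nonneg (by positivity) (by positivity),
    ← ENNReal.ofReal_mul (by positivity), ← ENNReal.ofReal_mul (by positivity),
    Real.mul_rpow (by positivity) (by positivity), Real.mul_rpow (by positivity) (by positivity),
    Real.rpow_rpow_inv hb hp₀.ne', ← Real.rpow_mul ha, ← Real.rpow_mul hd.le,
    ← Real.rpow_mul hd.le]
  have hexp_a : p * (1 - p⁻¹) = p - 1 := by field_simp
  have hexp_d : 1 - (p - β) = (β - p) * (1 - p⁻¹) + β * p⁻¹ := by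
    field_simp
    ring
  rw [hexp_a, hexp_d, Real.rpow_add hd]
  ring_nf

lemma le_rpow_mul_of_le_mul_rpow_mul_rpow_s10 {a b c : ℝ≥0∞} {p : ℝ} (hp : 0 < p) (ha : a ≠ ∞)
    (h : a ≤ c * (a ^ (1 - p⁻¹) * b ^ p⁻¹)) : a ≤ c ^ p * b := by
  rcases eq_or_ne a 0 with rfl | ha₀
  · exact zero_le
  have hsplit : a = a ^ (1 - p⁻¹) * a ^ p⁻¹ := by
    rw [← ENNReal.rpow_add _ _ ha₀ ha, sub_add_cancel, ENNReal.rpow_one]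
  have hroot : a ^ p⁻¹ ≤ c * b ^ p⁻¹ := by
    refine (ENNReal.mul_le_mul_iff_right (a := a ^ (1 - p⁻¹)) ?_ ?_).1 ?_
    · simp [ha₀, ha]
    · simp [ha₀, ha]
    · rw [← hsplit, mul_left_comm]
      exact h
  calc a = (a ^ p⁻¹) ^ p := (ENNReal.rpow_inv_rpow hp.ne' a).symm
    _ ≤ (c * b ^ p⁻¹) ^ p := by gcongr
    _ = c ^ p * b := by rw [ENNReal.mul_rpow_of_nonneg _ _ hp.le, ENNReal.rpow_inv_rpow hp.ne']

lemma hasCompactSupport_of_dense_of_isBounded {X Y : Type*} [PseudoMetricSpace X] [ProperSpace X]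
    [TopologicalSpace Y] [T1Space Y] [Zero Y] {u : X → Y} (hu : Continuous u) {Ω : Set X}
    (hΩ : Dense Ω) (hbdd : Bornology.IsBounded {x ∈ Ω | u x ≠ 0}) : HasCompactSupport u := by
  have hsupp : Function.support u ⊆ closure {x ∈ Ω | u x ≠ 0} := by
    have h := hΩ.open_subset_closure_inter (isOpen_compl_singleton.preimage hu (t := {0}ᶜ))
    rwa [inter_comm] at h
  exact isCompact_of_isClosed_isBounded (isClosed_tsupport u)
    (hbdd.closure.subset (closure_minimal hsupp isClosed_closure))

namespace AssouadThin

variable {E : Type*} [NormedAddCommGroup E] [NormedSpace ℝ E] [FiniteDimensional ℝ E]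
  [MeasurableSpace E] [BorelSpace E] {μ : Measure E} [μ.IsAddHaarMeasure] {K : Set E}
  {p β t C : ℝ}

lemma lintegral_infDist_rpow_mul_enorm_fderiv_abs_rpow_le (hK : AssouadThin μ K t C) (ht : 0 < t)
    (hne : K.Nonempty) (hp : 1 ≤ p) {u : E → ℝ} {L : ℝ≥0} (hu : LipschitzWith L u) :
    ∫⁻ x, ENNReal.ofReal (infDist x K ^ (1 - (p - β))) * ‖fderiv ℝ (fun y ↦ |u y| ^ p) x‖ₑ ∂μ ≤
      ENNReal.ofReal p *
        ((∫⁻ x, ENNReal.ofReal (|u x| ^ p * infDist x K ^ (β - p)) ∂μ) ^ (1 - p⁻¹) *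
          (∫⁻ x, ENNReal.ofReal (‖fderiv ℝ u x‖ ^ p * infDist x K ^ β) ∂μ) ^ p⁻¹) := by
  have : Measurable fun x ↦ ‖fderiv ℝ u x‖ := (measurable_fderiv ℝ u).norm
  have hmeas : Measurable u := hu.continuous.measurable
  set f : E → ℝ≥0∞ := fun x ↦ ENNReal.ofReal (|u x| ^ p * infDist x K ^ (β - p))
  set g : E → ℝ≥0∞ := fun x ↦ ENNReal.ofReal (‖fderiv ℝ u x‖ ^ p * infDist x K ^ β)
  calc ∫⁻ x, ENNReal.ofReal (infDist x K ^ (1 - (p - β))) * ‖fderiv ℝ (fun y ↦ |u y| ^ p) x‖ₑ ∂μ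
      ≤ ∫⁻ x, ENNReal.ofReal p * (f x ^ (1 - p⁻¹) * g x ^ p⁻¹) ∂μ := by
        refine lintegral_mono_ae ?_
        filter_upwards [hK.ae_infDist_pos ht hne, hu.ae_differentiableAt] with x hx hdiff
        rw [← ofReal_rpow_mul_eq_mul_rpow_inv hp (abs_nonneg _) (norm_nonneg _) hx,
          mul_left_comm, ← ENNReal.ofReal_mul (by linarith), ← ofReal_norm]
        gcongr
        exact norm_fderiv_abs_rpow_le hp hdiff
    _ = ENNReal.ofReal p * ∫⁻ x, f x ^ (1 - p⁻¹) * g x ^ p⁻¹ ∂μ :=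
        lintegral_const_mul' _ _ ofReal_ne_top
    _ ≤ ENNReal.ofReal p * ((∫⁻ x, f x ∂μ) ^ (1 - p⁻¹) * (∫⁻ x, g x ∂μ) ^ p⁻¹) := by
        gcongr
        exact ENNReal.lintegral_mul_norm_pow_le (by fun_prop) (by fun_prop)
          (sub_nonneg.2 (inv_le_one_of_one_le₀ hp)) (by positivity) (sub_add_cancel _ _)

lemma exists_lintegral_abs_rpow_mul_infDist_rpow_le (hK : AssouadThin μ K t C) (hne : K.Nonempty)
    (hp : 1 ≤ p) (hβ : β < p - 1) (ht : p - β < t) :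
    ∃ c : ℝ≥0, ∀ (u : E → ℝ) (L : ℝ≥0), LipschitzWith L u → HasCompactSupport u →
      ∫⁻ x, ENNReal.ofReal (|u x| ^ p * infDist x K ^ (β - p)) ∂μ ≤
        c * ∫⁻ x, ENNReal.ofReal (‖fderiv ℝ u x‖ ^ p * infDist x K ^ β) ∂μ := by
  have hp₀ : 0 < p := by linarith
  obtain ⟨c, hc⟩ := hK.exists_lintegral_infDist_rpow_mul_enorm_le (by linarith) ht hne
  refine ⟨(c * p.toNNReal) ^ p, fun u L hu hsupp ↦ ?_⟩
  obtain ⟨M, hM⟩ := hsupp.exists_bound_of_continuous hu.continuous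
  obtain ⟨L', hv⟩ := exists_lipschitzWith_abs_rpow hu hM hp
  have hvsupp : HasCompactSupport fun x ↦ |u x| ^ p :=
    hsupp.comp_left (g := fun a ↦ |a| ^ p) (by simp [hp₀.ne'])
  have integrand_eq (x : E) : ENNReal.ofReal (|u x| ^ p * infDist x K ^ (β - p)) =
      ENNReal.ofReal (infDist x K ^ (-(p - β))) * ‖|u x| ^ p‖ₑ := by
    rw [mul_comm, ENNReal.ofReal_mul' (by positivity), neg_sub,
      Real.enorm_of_nonneg (by positivity)]
  have hfin : ∫⁻ x, ENNReal.ofReal (|u x| ^ p * infDist x K ^ (β - p)) ∂μ ≠ ∞ := by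
    simp_rw [integrand_eq]
    exact (hK.lintegral_infDist_rpow_mul_enorm_lt_top (by linarith) ht hne
      hv.continuous hvsupp).ne
  rw [ENNReal.coe_rpow_of_nonneg _ hp₀.le]
  refine le_rpow_mul_of_le_mul_rpow_mul_rpow_s10 hp₀ hfin ?_
  calc ∫⁻ x, ENNReal.ofReal (|u x| ^ p * infDist x K ^ (β - p)) ∂μ
      ≤ c * ∫⁻ x, ENNReal.ofReal (infDist x K ^ (1 - (p - β))) *
          ‖fderiv ℝ (fun y ↦ |u y| ^ p) x‖ₑ ∂μ := by
        simp_rw [integrand_eq]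
        exact hc _ L' hv hvsupp
    _ ≤ _ := by
        rw [ENNReal.coe_mul, mul_assoc]
        gcongr
        exact hK.lintegral_infDist_rpow_mul_enorm_fderiv_abs_rpow_le (by linarith) hne hp hu

end AssouadThin

theorem hardy_bounded_support_of_lower_assouad_codim_gt_general {E : Type*} [NormedAddCommGroup E]
    [NormedSpace ℝ E] [FiniteDimensional ℝ E] [MeasurableSpace E] [BorelSpace E] (μ : Measure E)
    [μ.IsAddHaarMeasure] {p β : ℝ} (hp : 1 ≤ p) (hβ : β < p - 1) {Ω : Set E} (hΩc : Ωᶜ.Nonempty)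
    {t C_A : ℝ} (ht : p - β < t) (hthin : AssouadThin μ Ωᶜ t C_A) :
    ∃ C : ℝ, 0 < C ∧ ∀ u : E → ℝ,
      (∃ L : ℝ≥0, LipschitzWith L u) → Bornology.IsBounded {x ∈ Ω | u x ≠ 0} →
      ∫⁻ x in Ω, ENNReal.ofReal (|u x| ^ p * infDist x Ωᶜ ^ (β - p)) ∂μ ≤
        ENNReal.ofReal C *
          ∫⁻ x in Ω, ENNReal.ofReal (‖fderiv ℝ u x‖ ^ p * infDist x Ωᶜ ^ β) ∂μ := by
  obtain ⟨c, hc⟩ := hthin.exists_lintegral_abs_rpow_mul_infDist_rpow_le hΩc hp hβ ht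
  have hΩ : ∀ᵐ x ∂μ, x ∈ Ω :=
    measure_mono_null subset_closure (hthin.measure_closure_eq_zero (by linarith))
  refine ⟨c + 1, by positivity, fun u ⟨L, hu⟩ hbdd ↦ ?_⟩
  have hsupp := hasCompactSupport_of_dense_of_isBounded hu.continuous (Measure.dense_of_ae hΩ) hbdd
  rw [Measure.restrict_eq_self_of_ae_mem hΩ]
  refine (hc u L hu hsupp).trans ?_
  gcongr
  rw [← ENNReal.ofReal_coe_nnreal]
  exact ENNReal.ofReal_le_ofReal (le_add_of_nonneg_right zero_le_one)

/-- Euclidean case of Corollary 6.5: if `β < p - 1` and the lower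
Assouad codimension of `Ωᶜ` exceeds `p - β`, then the `(p,β)`-Hardy inequality holds for
all Lipschitz functions whose support in `Ω` is bounded (the test functions need not
vanish on `Ωᶜ`). -/
theorem hardy_bounded_support_of_lower_assouad_codim_gt
    (n : ℕ) (hn : 1 ≤ n) (p β : ℝ) (hp : 1 ≤ p) (hβ : β < p - 1)
    (Ω : Set (EuclideanSpace ℝ (Fin n))) (hΩopen : IsOpen Ω) (hΩc : Ωᶜ.Nonempty)
    (t C_A : ℝ) (ht : p - β < t) (hCA : 1 ≤ C_A)
    (hthin : ∀ x ∈ Ωᶜ, ∀ r R : ℝ, 0 < r → r < R →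
      volume (Metric.thickening r Ωᶜ ∩ Metric.closedBall x R) ≤
        ENNReal.ofReal (C_A * (r / R) ^ t) * volume (Metric.closedBall x R)) :
    ∃ C : ℝ, 0 < C ∧ ∀ u : EuclideanSpace ℝ (Fin n) → ℝ,
      (∃ L : NNReal, LipschitzWith L u) → Bornology.IsBounded {x ∈ Ω | u x ≠ 0} →
      ∫⁻ x in Ω, ENNReal.ofReal (|u x| ^ p * Metric.infDist x Ωᶜ ^ (β - p)) ≤
        ENNReal.ofReal C *
          ∫⁻ x in Ω, ENNReal.ofReal (‖fderiv ℝ u x‖ ^ p * Metric.infDist x Ωᶜ ^ β) :=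
  hardy_bounded_support_of_lower_assouad_codim_gt_general volume hp hβ hΩc ht hthin
end
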